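/- arXiv:math/0702573 — 10 statements merged into one kernel-verified Lean document; each statement's English description precedes it below -/
import Mathlib

section
/- Fix n ≥ 1 and times 0 < T_1 < … < T_n, and suppose Assumption A holds and that k_{j-1}(T_j,T_j) > 0 for j = 1,…,n. Define recursively ρ̄_0 = ρ̄ and, for j = 1,…,n, ᾱ_j(t) = ρ̄_{j-1}(t,T_j)/k_{j-1}(T_j,T_j) and ρ̄_j(t,T) = ρ̄_{j-1}(t,T) − α_j(T) ρ̄_{j-1}(t,T_j). Then for each j = 1,…,n: (α_j(T_n+εt) − α_j(T_n))/γ_ε converges to ᾱ_j(t) uniformly in t ∈ [0,1] as ε → 0⁺, and for every T > 0, (k_j(T_n+εt,T) − k_j(T_n,T))/γ_ε converges to ρ̄_j(t,T) uniformly in t ∈ [0,1] as ε → 0⁺; moreover ρ̄_j(t,T) = ρ̄_{j-1}(t,T) − ᾱ_j(t) k_{j-1}(T,T_j). -/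
open MeasureTheory Filter Topology Set

noncomputable def condCov (k : ℝ → ℝ → ℝ) (T : ℕ → ℝ) : ℕ → ℝ → ℝ → ℝ
  | 0 => k
  | j + 1 => fun t s =>
      condCov k T j t s -
        condCov k T j t (T (j + 1)) / condCov k T j (T (j + 1)) (T (j + 1)) *
          condCov k T j s (T (j + 1))

noncomputable def condRec (k : ℝ → ℝ → ℝ) (T : ℕ → ℝ) (f : ℝ → ℝ → ℝ) : ℕ → ℝ → ℝ → ℝ
  | 0 => f
  | j + 1 => fun t S =>
      condRec k T f j t S -
        condCov k T j S (T (j + 1)) / condCov k T j (T (j + 1)) (T (j + 1)) *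
          condRec k T f j t (T (j + 1))

/-- The rescaled increments of `condCov k T j` converge to `condRec k T ρ j`, at any stage `j`
whose conditioning times are positive. -/
theorem tendstoUniformlyOn_condCov_increment {k : ℝ → ℝ → ℝ} {T : ℕ → ℝ} {γ : ℝ → ℝ}
    {ρ : ℝ → ℝ → ℝ} {a : ℝ} {l : Filter ℝ} {s : Set ℝ}
    (hA : ∀ S : ℝ, 0 < S → TendstoUniformlyOn
        (fun ε t => (k (a + ε * t) S - k a S) / γ ε) (fun t => ρ t S) l s)
    (j : ℕ) (hT : ∀ i < j, 0 < T (i + 1)) (S : ℝ) (hS : 0 < S) :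
    TendstoUniformlyOn
      (fun ε t => (condCov k T j (a + ε * t) S - condCov k T j a S) / γ ε)
      (fun t => condRec k T ρ j t S) l s := by
  induction j generalizing S with
  | zero => exact hA S hS
  | succ j ih =>
    have ih' := ih fun i hi => hT i (by omega)
    have hmul := (uniformContinuous_const_smul
      (condCov k T j S (T (j + 1)) / condCov k T j (T (j + 1)) (T (j + 1)))).comp_tendstoUniformlyOn
        (ih' (T (j + 1)) (hT j (by omega)))
    refine ((ih' S hS).sub hmul).congr (Eventually.of_forall fun ε t _ => ?_)
    simp only [condCov, Pi.sub_apply, Function.comp_apply, smul_eq_mul]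
    ring

/-- Convergence of the rescaled regression coefficients `α_j` and of the rescaled increments
of the conditional covariances `k_j`, under Assumption A.  Here `condCov k T j` is `k_j`,
`condRec k T ρ j` is `ρ̄_j`, the `j`-th time is `T j` (for `j = 1,…,n`), and
`α_{j+1}(t) = condCov k T j t (T (j+1)) / condCov k T j (T (j+1)) (T (j+1))`,
`ᾱ_{j+1}(t) = condRec k T ρ j t (T (j+1)) / condCov k T j (T (j+1)) (T (j+1))`. -/
theorem conditional_rho_convergence
    (k : ℝ → ℝ → ℝ) (T : ℕ → ℝ) (n : ℕ) (γ : ℝ → ℝ) (ρ : ℝ → ℝ → ℝ)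
    (hn : 1 ≤ n)
    (hkcont : ContinuousOn (fun p : ℝ × ℝ => k p.1 p.2) (Ici 0 ×ˢ Ici 0))
    (hksymm : ∀ t s, k t s = k s t)
    (hT1 : 0 < T 1)
    (hTmono : ∀ j, 1 ≤ j → j + 1 ≤ n → T j < T (j + 1))
    (hγpos : ∀ ε : ℝ, 0 < ε → 0 < γ ε)
    (hγ0 : Tendsto γ (𝓝[>] (0:ℝ)) (𝓝 0))
    (hpos : ∀ j < n, 0 < condCov k T j (T (j + 1)) (T (j + 1)))
    (hA : ∀ T' : ℝ, 0 < T' → TendstoUniformlyOn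
        (fun ε t => (k (T n + ε * t) T' - k (T n) T') / γ ε)
        (fun t => ρ t T') (𝓝[>] (0:ℝ)) (Icc 0 1)) :
    ∀ j < n,
      (TendstoUniformlyOn
        (fun ε t =>
          (condCov k T j (T n + ε * t) (T (j + 1)) /
              condCov k T j (T (j + 1)) (T (j + 1)) -
            condCov k T j (T n) (T (j + 1)) /
              condCov k T j (T (j + 1)) (T (j + 1))) / γ ε)
        (fun t => condRec k T ρ j t (T (j + 1)) / condCov k T j (T (j + 1)) (T (j + 1)))
        (𝓝[>] (0:ℝ)) (Icc 0 1)) ∧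
      (∀ T' : ℝ, 0 < T' → TendstoUniformlyOn
        (fun ε t =>
          (condCov k T (j + 1) (T n + ε * t) T' - condCov k T (j + 1) (T n) T') / γ ε)
        (fun t => condRec k T ρ (j + 1) t T') (𝓝[>] (0:ℝ)) (Icc 0 1)) ∧
      (∀ t T' : ℝ, condRec k T ρ (j + 1) t T' =
        condRec k T ρ j t T' -
          condRec k T ρ j t (T (j + 1)) / condCov k T j (T (j + 1)) (T (j + 1)) *
            condCov k T j T' (T (j + 1))) := by
  have hTpos : ∀ i < n, 0 < T (i + 1) := by
    intro i
    induction i with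
    | zero => exact fun _ => hT1
    | succ i ih => exact fun hi => (ih (by omega)).trans (hTmono (i + 1) (by omega) (by omega))
  intro j hj
  refine ⟨?_, fun S hS => tendstoUniformlyOn_condCov_increment hA (j + 1)
    (fun i hi => hTpos i (by omega)) S hS, fun t S => ?_⟩
  · have hmul := (uniformContinuous_const_smul
      (condCov k T j (T (j + 1)) (T (j + 1)))⁻¹).comp_tendstoUniformlyOn
        (tendstoUniformlyOn_condCov_increment hA j (fun i hi => hTpos i (by omega))
          (T (j + 1)) (hTpos j hj))
    refine (hmul.congr (Eventually.of_forall fun ε t _ => ?_)).congr_right fun t _ => ?_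
    · simp only [Function.comp_apply, smul_eq_mul]
      ring
    · simp only [Function.comp_apply, smul_eq_mul]
      ring
  · simp only [condRec]
    ring
end

section
/- Fix n ≥ 1 and times 0 < T_1 < … < T_n, and suppose Assumptions A and GD hold and that k_{j-1}(T_j,T_j) > 0 for j = 1,…,n. Then for each j = 1,…,n, the rescaled second difference (k_j(T_n+εt,T_n+εs) − k_j(T_n+εt,T_n) − k_j(T_n,T_n+εs) + k_j(T_n,T_n))/γ_ε² converges, uniformly for (t,s) ∈ [0,1]², as ε → 0⁺, to k̄_j(t,s) = k̄(t,s) − Σ_{ℓ=1}^{j} k_{ℓ-1}(T_ℓ,T_ℓ) ᾱ_ℓ(t) ᾱ_ℓ(s). -/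
open MeasureTheory Filter Topology Set

noncomputable def kbarN (k : ℝ → ℝ → ℝ) (T : ℕ → ℝ) (ρ : ℝ → ℝ → ℝ) (kbar : ℝ → ℝ → ℝ)
    (n : ℕ) (t s : ℝ) : ℝ :=
  kbar t s - ∑ ℓ ∈ Finset.range n, condCov k T ℓ (T (ℓ + 1)) (T (ℓ + 1)) *
    (condRec k T ρ ℓ t (T (ℓ + 1)) / condCov k T ℓ (T (ℓ + 1)) (T (ℓ + 1))) *
    (condRec k T ρ ℓ s (T (ℓ + 1)) / condCov k T ℓ (T (ℓ + 1)) (T (ℓ + 1)))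

/-- Uniform convergence of real functions on a set is preserved by a constant factor. -/
theorem tendstoUniformlyOn_const_mul {ι α : Type*} {F : ι → α → ℝ} {f : α → ℝ} {l : Filter ι}
    {s : Set α} (h : TendstoUniformlyOn F f l s) (c : ℝ) :
    TendstoUniformlyOn (fun i x => c * F i x) (fun x => c * f x) l s :=
  (uniformContinuous_const_smul c).comp_tendstoUniformlyOn h

/-- Uniform limits on compact sets can be tensored, provided the limits are continuous. -/
theorem tendstoUniformlyOn_tensor {ι α β : Type*} [TopologicalSpace α] [TopologicalSpace β]
    {F : ι → α → ℝ} {f : α → ℝ} {G : ι → β → ℝ} {g : β → ℝ} {l : Filter ι}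
    {s : Set α} {t : Set β} (hs : IsCompact s) (ht : IsCompact t)
    (hF : TendstoUniformlyOn F f l s) (hG : TendstoUniformlyOn G g l t)
    (hf : ContinuousOn f s) (hg : ContinuousOn g t) :
    TendstoUniformlyOn (fun i (p : α × β) => F i p.1 * G i p.2) (fun p => f p.1 * g p.2) l
      (s ×ˢ t) := by
  have hF' : TendstoUniformlyOn (fun i (p : α × β) => F i p.1) (fun p => f p.1) l (s ×ˢ t) :=
    (hF.comp Prod.fst).mono fun _ hp => hp.1
  have hG' : TendstoUniformlyOn (fun i (p : α × β) => G i p.2) (fun p => g p.2) l (s ×ˢ t) :=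
    (hG.comp Prod.snd).mono fun _ hp => hp.2
  rw [← tendstoLocallyUniformlyOn_iff_tendstoUniformlyOn_of_compact (hs.prod ht)]
  exact hF'.tendstoLocallyUniformlyOn.mul₀ hG'.tendstoLocallyUniformlyOn
    (hf.comp continuousOn_fst fun _ hp => hp.1) (hg.comp continuousOn_snd fun _ hp => hp.2)

/-- A uniform limit of rescaled first differences of a function continuous on `[0,∞)` is
continuous on `[0,1]`. -/
theorem continuousOn_of_tendstoUniformlyOn_difference {f g γ : ℝ → ℝ} {x : ℝ} (hx : 0 ≤ x)
    (hf : ContinuousOn f (Ici 0))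
    (h : TendstoUniformlyOn (fun ε t => (f (x + ε * t) - f x) / γ ε) g (𝓝[>] (0 : ℝ)) (Icc 0 1)) :
    ContinuousOn g (Icc 0 1) := by
  refine h.continuousOn (Eventually.frequently ?_)
  filter_upwards [self_mem_nhdsWithin] with ε hε
  refine ContinuousOn.div_const (ContinuousOn.sub ?_ continuousOn_const) _
  refine hf.comp (by fun_prop) fun t ht => ?_
  exact add_nonneg hx (mul_nonneg (le_of_lt hε) ht.1)

/-- Continuity in the first variable is inherited by the conditional covariances. -/
theorem continuousOn_condCov_left {k : ℝ → ℝ → ℝ} {T : ℕ → ℝ} {n : ℕ}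
    (hT : ∀ j, j < n → 0 < T (j + 1))
    (hk : ∀ S, 0 < S → ContinuousOn (fun t => k t S) (Ici 0)) :
    ∀ j ≤ n, ∀ S, 0 < S → ContinuousOn (fun t => condCov k T j t S) (Ici 0) := by
  intro j
  induction j with
  | zero => exact fun _ => hk
  | succ j ih =>
    intro hj S hS
    exact (ih (by omega) S hS).sub
      (((ih (by omega) _ (hT j hj)).div_const _).mul continuousOn_const)

/-- Assumption A is inherited by the conditional covariances. -/
theorem tendstoUniformlyOn_condCov_difference {k ρ : ℝ → ℝ → ℝ} {T : ℕ → ℝ} {γ : ℝ → ℝ} {n : ℕ}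
    {x : ℝ} (hT : ∀ j, j < n → 0 < T (j + 1))
    (hA : ∀ S, 0 < S → TendstoUniformlyOn (fun ε t => (k (x + ε * t) S - k x S) / γ ε)
      (fun t => ρ t S) (𝓝[>] (0 : ℝ)) (Icc 0 1)) :
    ∀ j ≤ n, ∀ S, 0 < S → TendstoUniformlyOn
      (fun ε t => (condCov k T j (x + ε * t) S - condCov k T j x S) / γ ε)
      (fun t => condRec k T ρ j t S) (𝓝[>] (0 : ℝ)) (Icc 0 1) := by
  intro j
  induction j with
  | zero => exact fun _ => hA
  | succ j ih =>
    intro hj S hS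
    refine ((ih (by omega) S hS).sub (tendstoUniformlyOn_const_mul (ih (by omega) _ (hT j hj))
      (condCov k T j S (T (j + 1)) / condCov k T j (T (j + 1)) (T (j + 1))))).congr
        (Eventually.of_forall fun ε t _ => ?_)
    simp only [condCov, Pi.sub_apply]
    ring

/-- Under Assumptions A and GD, the rescaled second difference of the conditional covariance
`k_j` converges uniformly on `[0,1]²` to
`k̄_j(t,s) = k̄(t,s) − Σ_{ℓ=1}^{j} k_{ℓ-1}(T_ℓ,T_ℓ) ᾱ_ℓ(t) ᾱ_ℓ(s) = kbarN k T ρ kbar j t s`. -/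
theorem conditional_secondDifference_convergence
    (k : ℝ → ℝ → ℝ) (T : ℕ → ℝ) (n : ℕ) (γ : ℝ → ℝ) (ρ : ℝ → ℝ → ℝ) (kbar : ℝ → ℝ → ℝ)
    (hn : 1 ≤ n)
    (hkcont : ContinuousOn (fun p : ℝ × ℝ => k p.1 p.2) (Ici 0 ×ˢ Ici 0))
    (hksymm : ∀ t s, k t s = k s t)
    (hT1 : 0 < T 1)
    (hTmono : ∀ j, 1 ≤ j → j + 1 ≤ n → T j < T (j + 1))
    (hγpos : ∀ ε : ℝ, 0 < ε → 0 < γ ε)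
    (hγ0 : Tendsto γ (𝓝[>] (0:ℝ)) (𝓝 0))
    (hpos : ∀ j < n, 0 < condCov k T j (T (j + 1)) (T (j + 1)))
    (hA : ∀ T' : ℝ, 0 < T' → TendstoUniformlyOn
        (fun ε t => (k (T n + ε * t) T' - k (T n) T') / γ ε)
        (fun t => ρ t T') (𝓝[>] (0:ℝ)) (Icc 0 1))
    (hGD : TendstoUniformlyOn
        (fun ε (p : ℝ × ℝ) =>
          (k (T n + ε * p.1) (T n + ε * p.2) - k (T n + ε * p.1) (T n) -
            k (T n) (T n + ε * p.2) + k (T n) (T n)) / (γ ε) ^ 2)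
        (fun p => kbar p.1 p.2) (𝓝[>] (0:ℝ)) (Icc 0 1 ×ˢ Icc 0 1))
    :
    ∀ j, 1 ≤ j → j ≤ n → TendstoUniformlyOn
      (fun ε (p : ℝ × ℝ) =>
        (condCov k T j (T n + ε * p.1) (T n + ε * p.2) -
          condCov k T j (T n + ε * p.1) (T n) -
          condCov k T j (T n) (T n + ε * p.2) +
          condCov k T j (T n) (T n)) / (γ ε) ^ 2)
      (fun p => kbarN k T ρ kbar j p.1 p.2) (𝓝[>] (0:ℝ)) (Icc 0 1 ×ˢ Icc 0 1) := by
  have hTpos : ∀ j, j < n → 0 < T (j + 1) := by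
    intro j
    induction j with
    | zero => exact fun _ => hT1
    | succ j ih => exact fun hj => (ih (by omega)).trans (hTmono (j + 1) (by omega) hj)
  have hTn : 0 < T n := by
    obtain ⟨m, rfl⟩ : ∃ m, n = m + 1 := ⟨n - 1, by omega⟩
    exact hTpos m (by omega)
  have hkleft : ∀ S, 0 < S → ContinuousOn (fun t => k t S) (Ici 0) := fun S hS =>
    hkcont.comp (f := fun t : ℝ => (t, S)) (by fun_prop) fun t ht => ⟨ht, hS.le⟩
  rintro j -
  induction j with
  | zero => exact fun _ => by simpa [condCov, kbarN] using hGD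
  | succ j ih =>
    intro hj
    have hdiff := tendstoUniformlyOn_condCov_difference hTpos hA j (by omega) _ (hTpos j hj)
    have hcont := continuousOn_of_tendstoUniformlyOn_difference hTn.le
      (continuousOn_condCov_left hTpos hkleft j (by omega) _ (hTpos j hj)) hdiff
    refine (((ih (by omega)).sub (tendstoUniformlyOn_const_mul
      (tendstoUniformlyOn_tensor isCompact_Icc isCompact_Icc hdiff hdiff hcont hcont)
      (condCov k T j (T (j + 1)) (T (j + 1)))⁻¹)).congr
        (Eventually.of_forall fun ε p _ => ?_)).congr_right fun p _ => ?_
    · simp only [condCov, Pi.sub_apply]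
      ring
    · have := (hpos j hj).ne'
      simp only [kbarN, Finset.sum_range_succ, Pi.sub_apply]
      field_simp
      ring
end

section
/- Fix n ≥ 1 and times 0 < T_1 < … < T_n with k_{j-1}(T_j,T_j) > 0 for j = 1,…,n, suppose Assumptions A and GD hold, and assume k̄_n(1,1) > 0, where k̄_n(t,s) = k̄(t,s) − Σ_{ℓ=1}^{n} k_{ℓ-1}(T_ℓ,T_ℓ) ᾱ_ℓ(t) ᾱ_ℓ(s). Then, as ε → 0⁺, the covariance of the bridge process, namely [k_n(T_n+εt,T_n+εs) − k_n(T_n+εt,T_n+ε)·k_n(T_n+ε,T_n+εs)/k_n(T_n+ε,T_n+ε)]/γ_ε², converges uniformly for (t,s) ∈ [0,1]² to k̄_Y(t,s) = k̄_n(t,s) − k̄_n(t,1)·k̄_n(s,1)/k̄_n(1,1). -/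
open MeasureTheory Filter Topology Set

section LocallyUniform

variable {X ι : Type*} [TopologicalSpace X] {s : Set X} {F G : ι → X → ℝ} {f g : X → ℝ}
  {l : Filter ι}

/-- Locally uniform convergence on `s` to a limit that is continuous on `s`. -/
def TendstoLocUnifContOn (F : ι → X → ℝ) (f : X → ℝ) (l : Filter ι) (s : Set X) : Prop :=
  TendstoLocallyUniformlyOn F f l s ∧ ContinuousOn f s

namespace TendstoLocUnifContOn

lemma congr (hF : TendstoLocUnifContOn F f l s) (h : ∀ᶠ i in l, ∀ x ∈ s, F i x = G i x) :
    TendstoLocUnifContOn G f l s := by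
  refine ⟨fun u hu x hx => ?_, hF.2⟩
  obtain ⟨t, ht, hev⟩ := hF.1 u hu x hx
  refine ⟨t ∩ s, inter_mem ht self_mem_nhdsWithin, ?_⟩
  filter_upwards [hev, h] with i hi hGi y hy
  rw [← hGi y hy.2]
  exact hi y hy.1

lemma sub (hF : TendstoLocUnifContOn F f l s) (hG : TendstoLocUnifContOn G g l s) :
    TendstoLocUnifContOn (fun i x => F i x - G i x) (fun x => f x - g x) l s :=
  ⟨hF.1.sub hG.1, hF.2.sub hG.2⟩

lemma mul (hF : TendstoLocUnifContOn F f l s) (hG : TendstoLocUnifContOn G g l s) :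
    TendstoLocUnifContOn (fun i x => F i x * G i x) (fun x => f x * g x) l s :=
  ⟨hF.1.mul₀ hG.1 hF.2 hG.2, hF.2.mul hG.2⟩

lemma div (hF : TendstoLocUnifContOn F f l s) (hG : TendstoLocUnifContOn G g l s)
    (h0 : ∀ x ∈ s, g x ≠ 0) :
    TendstoLocUnifContOn (fun i x => F i x / G i x) (fun x => f x / g x) l s :=
  ⟨hF.1.div₀ hG.1 hF.2 hG.2 h0, hF.2.div hG.2 h0⟩

lemma const (c : ℝ) : TendstoLocUnifContOn (fun _ _ => c) (fun _ => c) l s :=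
  ⟨fun _ hu _ _ => ⟨univ, univ_mem, .of_forall fun _ _ _ => refl_mem_uniformity hu⟩,
    continuousOn_const⟩

lemma comp {Y : Type*} [TopologicalSpace Y] {t : Set Y} (hF : TendstoLocUnifContOn F f l s)
    (φ : Y → X) (hφ : MapsTo φ t s) (hc : ContinuousOn φ t) :
    TendstoLocUnifContOn (fun i y => F i (φ y)) (fun y => f (φ y)) l t :=
  ⟨hF.1.comp φ hφ hc, hF.2.comp hc hφ⟩

end TendstoLocUnifContOn

lemma TendstoUniformlyOn.tendstoLocUnifContOn [l.NeBot] (h : TendstoUniformlyOn F f l s)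
    (hc : ∀ᶠ i in l, ContinuousOn (F i) s) : TendstoLocUnifContOn F f l s :=
  ⟨h.tendstoLocallyUniformlyOn, h.continuousOn hc.frequently⟩

end LocallyUniform

section CondCov

variable {k : ℝ → ℝ → ℝ} {T : ℕ → ℝ} {γ : ℝ → ℝ} {ρ kbar : ℝ → ℝ → ℝ} {a : ℝ} {l : Filter ℝ}

lemma condCov_comm (hk : ∀ t s, k t s = k s t) (j : ℕ) (t s : ℝ) :
    condCov k T j t s = condCov k T j s t := by
  induction j generalizing t s with
  | zero => exact hk t s
  | succ j ih =>
    simp only [condCov]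
    rw [ih t s]
    ring

lemma condCov_succ_right_eq_zero {j : ℕ} (h : condCov k T j (T (j + 1)) (T (j + 1)) ≠ 0) (t : ℝ) :
    condCov k T (j + 1) t (T (j + 1)) = 0 := by
  simp only [condCov]
  rw [div_mul_cancel₀ _ h, sub_self]

/-- Rescaled increments of the conditional covariances converge to `condRec`. -/
lemma tendsto_condCov_increment {I : Set ℝ}
    (hA : ∀ S, 0 < S → TendstoLocUnifContOn
      (fun ε t => (k (a + ε * t) S - k a S) / γ ε) (fun t => ρ t S) l I)
    (j : ℕ) (hT : ∀ i < j, 0 < T (i + 1)) (S : ℝ) (hS : 0 < S) :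
    TendstoLocUnifContOn
      (fun ε t => (condCov k T j (a + ε * t) S - condCov k T j a S) / γ ε)
      (fun t => condRec k T ρ j t S) l I := by
  induction j generalizing S with
  | zero => exact hA S hS
  | succ j ih =>
    have hT' : ∀ i < j, 0 < T (i + 1) := fun i hi => hT i (hi.trans j.lt_succ_self)
    refine ((ih hT' S hS).sub
      ((TendstoLocUnifContOn.const _).mul (ih hT' _ (hT j j.lt_succ_self)))).congr
      (.of_forall fun ε t _ => ?_)
    simp only [condCov]
    ring

/-- Rescaled second differences of the conditional covariances converge to `kbarN`. -/
lemma tendsto_condCov_second_difference {I : Set ℝ}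
    (hA : ∀ S, 0 < S → TendstoLocUnifContOn
      (fun ε t => (k (a + ε * t) S - k a S) / γ ε) (fun t => ρ t S) l I)
    (hGD : TendstoLocUnifContOn
      (fun ε (p : ℝ × ℝ) => (k (a + ε * p.1) (a + ε * p.2) - k (a + ε * p.1) a -
        k a (a + ε * p.2) + k a a) / γ ε ^ 2) (fun p => kbar p.1 p.2) l (I ×ˢ I))
    (j : ℕ) (hT : ∀ i < j, 0 < T (i + 1))
    (hpos : ∀ i < j, condCov k T i (T (i + 1)) (T (i + 1)) ≠ 0) :
    TendstoLocUnifContOn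
      (fun ε (p : ℝ × ℝ) => (condCov k T j (a + ε * p.1) (a + ε * p.2) -
        condCov k T j (a + ε * p.1) a - condCov k T j a (a + ε * p.2) +
        condCov k T j a a) / γ ε ^ 2) (fun p => kbarN k T ρ kbar j p.1 p.2) l (I ×ˢ I) := by
  induction j with
  | zero => simpa [kbarN, condCov] using hGD
  | succ j ih =>
    have hT' : ∀ i < j, 0 < T (i + 1) := fun i hi => hT i (hi.trans j.lt_succ_self)
    have hincr := tendsto_condCov_increment hA j hT' _ (hT j j.lt_succ_self)
    have hfst := hincr.comp (t := I ×ˢ I) Prod.fst (fun p hp => hp.1) continuousOn_fst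
    have hsnd := hincr.comp (t := I ×ˢ I) Prod.snd (fun p hp => hp.2) continuousOn_snd
    have hc := TendstoLocUnifContOn.const (l := l) (s := I ×ˢ I)
      (condCov k T j (T (j + 1)) (T (j + 1)))⁻¹
    have h := ((ih hT' fun i hi => hpos i (hi.trans j.lt_succ_self)).sub
      (hc.mul (hfst.mul hsnd))).congr (G := fun ε (p : ℝ × ℝ) =>
        (condCov k T (j + 1) (a + ε * p.1) (a + ε * p.2) -
        condCov k T (j + 1) (a + ε * p.1) a - condCov k T (j + 1) a (a + ε * p.2) +
        condCov k T (j + 1) a a) / γ ε ^ 2) (.of_forall fun ε p _ => by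
          simp only [condCov]
          ring)
    convert h using 2 with p
    have h0 := hpos j j.lt_succ_self
    simp only [kbarN, Finset.sum_range_succ]
    field_simp
    ring

end CondCov

/-- Under Assumptions A and GD, if `k̄_n(1,1) > 0` then the covariance of the bridge of the
`n`-fold conditional process, rescaled by `γ_ε²`, converges uniformly on `[0,1]²` to
`k̄_Y(t,s) = k̄_n(t,s) − k̄_n(t,1) k̄_n(s,1) / k̄_n(1,1)`. -/
theorem bridge_covariance_convergence
    (k : ℝ → ℝ → ℝ) (T : ℕ → ℝ) (n : ℕ) (γ : ℝ → ℝ) (ρ : ℝ → ℝ → ℝ) (kbar : ℝ → ℝ → ℝ)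
    (hn : 1 ≤ n)
    (hkcont : ContinuousOn (fun p : ℝ × ℝ => k p.1 p.2) (Ici 0 ×ˢ Ici 0))
    (hksymm : ∀ t s, k t s = k s t)
    (hT1 : 0 < T 1)
    (hTmono : ∀ j, 1 ≤ j → j + 1 ≤ n → T j < T (j + 1))
    (hγpos : ∀ ε : ℝ, 0 < ε → 0 < γ ε)
    (hγ0 : Tendsto γ (𝓝[>] (0:ℝ)) (𝓝 0))
    (hpos : ∀ j < n, 0 < condCov k T j (T (j + 1)) (T (j + 1)))
    (hA : ∀ T' : ℝ, 0 < T' → TendstoUniformlyOn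
        (fun ε t => (k (T n + ε * t) T' - k (T n) T') / γ ε)
        (fun t => ρ t T') (𝓝[>] (0:ℝ)) (Icc 0 1))
    (hGD : TendstoUniformlyOn
        (fun ε (p : ℝ × ℝ) =>
          (k (T n + ε * p.1) (T n + ε * p.2) - k (T n + ε * p.1) (T n) -
            k (T n) (T n + ε * p.2) + k (T n) (T n)) / (γ ε) ^ 2)
        (fun p => kbar p.1 p.2) (𝓝[>] (0:ℝ)) (Icc 0 1 ×ˢ Icc 0 1))
    (hk11 : 0 < kbarN k T ρ kbar n 1 1) :
    TendstoUniformlyOn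
      (fun ε (p : ℝ × ℝ) =>
        (condCov k T n (T n + ε * p.1) (T n + ε * p.2) -
          condCov k T n (T n + ε * p.1) (T n + ε) *
            condCov k T n (T n + ε) (T n + ε * p.2) /
              condCov k T n (T n + ε) (T n + ε)) / (γ ε) ^ 2)
      (fun p => kbarN k T ρ kbar n p.1 p.2 -
        kbarN k T ρ kbar n p.1 1 * kbarN k T ρ kbar n p.2 1 / kbarN k T ρ kbar n 1 1)
      (𝓝[>] (0:ℝ)) (Icc 0 1 ×ˢ Icc 0 1) := by
  have hTpos : ∀ i < n, 0 < T (i + 1) := by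
    intro i hi
    induction i with
    | zero => simpa using hT1
    | succ i ih => exact (ih (by omega)).trans (hTmono (i + 1) (by omega) (by omega))
  obtain ⟨m, rfl⟩ : ∃ m, n = m + 1 := ⟨n - 1, by omega⟩
  have ha : 0 < T (m + 1) := hTpos m m.lt_succ_self
  set a := T (m + 1)
  have hshift : ∀ ε : ℝ, 0 < ε → ∀ t ∈ Icc (0 : ℝ) 1, a + ε * t ∈ Ici (0 : ℝ) :=
    fun ε hε t ht => add_nonneg ha.le (mul_nonneg hε.le ht.1)
  have hkcomp : ∀ {Y : Type} [TopologicalSpace Y] {s : Set Y} {u v : Y → ℝ},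
      ContinuousOn u s → ContinuousOn v s → (∀ y ∈ s, u y ∈ Ici 0) → (∀ y ∈ s, v y ∈ Ici 0) →
      ContinuousOn (fun y => k (u y) (v y)) s := fun hu hv hu0 hv0 =>
    hkcont.comp (hu.prodMk hv) fun y hy => ⟨hu0 y hy, hv0 y hy⟩
  have hA' : ∀ S, 0 < S → TendstoLocUnifContOn
      (fun ε t => (k (a + ε * t) S - k a S) / γ ε) (fun t => ρ t S) (𝓝[>] 0) (Icc 0 1) := by
    intro S hS
    refine (hA S hS).tendstoLocUnifContOn ?_
    filter_upwards [self_mem_nhdsWithin] with ε hε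
    exact ((hkcomp (by fun_prop) continuousOn_const (hshift ε hε) fun _ _ => hS.le).sub
      continuousOn_const).div_const _
  have hGD' := hGD.tendstoLocUnifContOn (by
    filter_upwards [self_mem_nhdsWithin] with ε hε
    have h1 : ∀ p ∈ Icc (0 : ℝ) 1 ×ˢ Icc (0 : ℝ) 1, a + ε * p.1 ∈ Ici (0 : ℝ) :=
      fun p hp => hshift ε hε _ hp.1
    have h2 : ∀ p ∈ Icc (0 : ℝ) 1 ×ˢ Icc (0 : ℝ) 1, a + ε * p.2 ∈ Ici (0 : ℝ) :=
      fun p hp => hshift ε hε _ hp.2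
    exact ((((hkcomp (by fun_prop) (by fun_prop) h1 h2).sub
      (hkcomp (by fun_prop) continuousOn_const h1 fun _ _ => ha.le)).sub
      (hkcomp continuousOn_const (by fun_prop) (fun _ _ => ha.le) h2)).add
      continuousOn_const).div_const _)
  have hzero : ∀ t, condCov k T (m + 1) t a = 0 :=
    condCov_succ_right_eq_zero (hpos m m.lt_succ_self).ne'
  have hcov := (tendsto_condCov_second_difference hA' hGD' (m + 1) hTpos
    fun i hi => (hpos i hi).ne').congr (G := fun ε (p : ℝ × ℝ) =>
      condCov k T (m + 1) (a + ε * p.1) (a + ε * p.2) / γ ε ^ 2) (.of_forall fun ε p _ => by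
        simp only [hzero, condCov_comm hksymm (m + 1) a, sub_zero, add_zero])
  have h1 : (1 : ℝ) ∈ Icc (0 : ℝ) 1 := ⟨zero_le_one, le_rfl⟩
  have hfst := hcov.comp (t := Icc 0 1 ×ˢ Icc 0 1) (fun p : ℝ × ℝ => (p.1, (1 : ℝ)))
    (fun p hp => ⟨hp.1, h1⟩) (by fun_prop)
  have hsnd := hcov.comp (t := Icc 0 1 ×ˢ Icc 0 1) (fun p : ℝ × ℝ => (p.2, (1 : ℝ)))
    (fun p hp => ⟨hp.2, h1⟩) (by fun_prop)
  have hone := hcov.comp (t := Icc 0 1 ×ˢ Icc 0 1) (fun _ : ℝ × ℝ => ((1 : ℝ), (1 : ℝ)))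
    (fun p hp => ⟨h1, h1⟩) (by fun_prop)
  have hbridge := hcov.sub ((hfst.mul hsnd).div hone fun _ _ => hk11.ne')
  refine (tendstoLocallyUniformlyOn_iff_tendstoUniformlyOn_of_compact
    (isCompact_Icc.prod isCompact_Icc)).1 (hbridge.congr ?_).1
  filter_upwards [self_mem_nhdsWithin] with ε hε p _
  have hγ := (hγpos ε hε).ne'
  simp only [mul_one]
  rw [condCov_comm hksymm (m + 1) (a + ε) (a + ε * p.2)]
  rcases eq_or_ne (condCov k T (m + 1) (a + ε) (a + ε)) 0 with h0 | h0
  · simp [h0]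
  · field_simp
end

section
/- Let H ∈ (0,1) and k_H(t,s) = (t^{2H} + s^{2H} − |t−s|^{2H})/2. Then for every T_n > 0 and every T > 0, lim_{ε→0⁺} sup_{t∈[0,1]} |k_H(T_n+εt, T) − k_H(T_n, T)| / ε^H = 0. -/
open MeasureTheory Filter Topology Set

/-- The covariance function of fractional Brownian motion with Hurst index `H`. -/
noncomputable def fbmCov (H t s : ℝ) : ℝ := (t ^ (2*H) + s ^ (2*H) - |t - s| ^ (2*H)) / 2

open Asymptotics

/-- Near `0` on the nonnegative half-line, a higher power is negligible against a lower one. -/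
theorem rpow_isLittleO_rpow_nhdsGE_zero {a b : ℝ} (ha : 0 < a) (hab : a < b) :
    (fun h : ℝ => h ^ b) =o[𝓝[≥] 0] fun h => h ^ a := by
  have hlim : Tendsto (fun h : ℝ => h ^ (b - a)) (𝓝[≥] 0) (𝓝 0) := by
    have hc := (Real.continuousAt_rpow_const 0 (b - a) (Or.inr (sub_pos.2 hab).le)).tendsto
    rw [Real.zero_rpow (sub_pos.2 hab).ne'] at hc
    exact hc.mono_left nhdsWithin_le_nhds
  have ho : (fun h : ℝ => h ^ (b - a) * h ^ a) =o[𝓝[≥] 0] fun h => 1 * h ^ a :=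
    ((isLittleO_one_iff ℝ).2 hlim).mul_isBigO (isBigO_refl _ _)
  refine ho.congr' ?_ (by simp)
  filter_upwards [self_mem_nhdsWithin] with h hh
  rw [← Real.rpow_add_of_nonneg hh (sub_pos.2 hab).le ha.le, sub_add_cancel]

/-- The right increment of a function differentiable at `x` is `o(h ^ a)` for `0 < a < 1`. -/
theorem DifferentiableAt.sub_isLittleO_rpow_nhdsGE_zero {f : ℝ → ℝ} {x a : ℝ}
    (hf : DifferentiableAt ℝ f x) (ha : 0 < a) (ha1 : a < 1) :
    (fun h => f (x + h) - f x) =o[𝓝[≥] 0] fun h : ℝ => h ^ a := by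
  have hshift : Tendsto (fun h : ℝ => x + h) (𝓝[≥] 0) (𝓝 x) := by
    have hc : Tendsto (fun h : ℝ => x + h) (𝓝 0) (𝓝 (x + 0)) :=
      (continuous_const.add continuous_id).tendsto 0
    rw [add_zero] at hc
    exact hc.mono_left nhdsWithin_le_nhds
  have hO : (fun h => f (x + h) - f x) =O[𝓝[≥] 0] fun h : ℝ => h ^ (1 : ℝ) := by
    simpa [Function.comp_def] using hf.isBigO_sub.comp_tendsto hshift
  exact hO.trans_isLittleO (rpow_isLittleO_rpow_nhdsGE_zero ha ha1)

/-- The right increment of the covariance in its first variable is `o(h ^ H)`. -/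
theorem fbmCov_sub_isLittleO {H Tn T : ℝ} (hH : H ∈ Ioo (0 : ℝ) 1) (hTn : 0 < Tn) :
    (fun h => fbmCov H (Tn + h) T - fbmCov H Tn T) =o[𝓝[≥] 0] fun h : ℝ => h ^ H := by
  obtain ⟨hH0, hH1⟩ := hH
  have hpow : (fun h => (Tn + h) ^ (2 * H) - Tn ^ (2 * H)) =o[𝓝[≥] 0] fun h : ℝ => h ^ H :=
    DifferentiableAt.sub_isLittleO_rpow_nhdsGE_zero (f := fun x : ℝ => x ^ (2 * H))
      (differentiableAt_id.rpow_const (Or.inl hTn.ne')) hH0 hH1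
  have habs : (fun h => |Tn + h - T| ^ (2 * H) - |Tn - T| ^ (2 * H)) =o[𝓝[≥] 0]
      fun h : ℝ => h ^ H := by
    rcases eq_or_ne Tn T with rfl | hne
    · refine (rpow_isLittleO_rpow_nhdsGE_zero hH0 (by linarith : H < 2 * H)).congr' ?_ .rfl
      filter_upwards [self_mem_nhdsWithin] with h hh
      simp [abs_of_nonneg (mem_Ici.1 hh), Real.zero_rpow (by positivity : 2 * H ≠ 0)]
    · have hsub : Tn - T ≠ 0 := sub_ne_zero.2 hne
      exact DifferentiableAt.sub_isLittleO_rpow_nhdsGE_zero (f := fun x : ℝ => |x - T| ^ (2 * H))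
        (((differentiableAt_id.sub_const T).abs hsub).rpow_const
          (Or.inl (abs_ne_zero.2 hsub))) hH0 hH1
  refine ((hpow.sub habs).const_mul_left (1 / 2)).congr_left fun h => ?_
  simp only [fbmCov]
  ring

/-- Assumption A holds for fractional Brownian motion with `γ_ε = ε^H` and `ρ̄ ≡ 0`:
the increment of the covariance in the first variable is `o(ε^H)` uniformly on `[0,1]`. -/
theorem fbm_assumptionA (H : ℝ) (hH : H ∈ Ioo (0:ℝ) 1) (Tn T : ℝ) (hTn : 0 < Tn) (hT : 0 < T) :
    TendstoUniformlyOn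
      (fun ε t => |fbmCov H (Tn + ε * t) T - fbmCov H Tn T| / ε ^ H)
      (fun _ => 0) (𝓝[>] (0:ℝ)) (Icc 0 1) := by
  rw [Metric.tendstoUniformlyOn_iff]
  intro c hc
  have hbound := (fbmCov_sub_isLittleO (T := T) hH hTn).def (half_pos hc)
  obtain ⟨δ, hδ, hball⟩ := Metric.mem_nhdsWithin_iff.1 hbound
  filter_upwards [Ioo_mem_nhdsGT hδ] with ε hε t ht
  have hε0 : 0 < ε := hε.1
  have hεt : 0 ≤ ε * t := mul_nonneg hε0.le ht.1
  have hle : ε * t ≤ ε := mul_le_of_le_one_right hε0.le ht.2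
  have hpos : 0 < ε ^ H := Real.rpow_pos_of_pos hε0 H
  have hinc : |fbmCov H (Tn + ε * t) T - fbmCov H Tn T| ≤ c / 2 * (ε * t) ^ H := by
    have hmem := @hball (ε * t) ⟨by
      rw [Metric.mem_ball, dist_zero_right, Real.norm_of_nonneg hεt]
      exact hle.trans_lt hε.2, hεt⟩
    simpa [Real.norm_eq_abs, abs_of_nonneg (Real.rpow_nonneg hεt H)] using hmem
  rw [dist_zero_left, Real.norm_of_nonneg (by positivity), div_lt_iff₀ hpos]
  calc |fbmCov H (Tn + ε * t) T - fbmCov H Tn T| ≤ c / 2 * (ε * t) ^ H := hinc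
    _ ≤ c / 2 * ε ^ H := by
      gcongr
      exact hH.1.le
    _ < c * ε ^ H := by
      gcongr
      exact half_lt_self hc
end

section
/- Let H ∈ (0,1), k = k_H with k_H(t,s) = (t^{2H} + s^{2H} − |t−s|^{2H})/2, fix n ≥ 1 and times 0 < T_1 < … < T_n, and assume k_{j-1}(T_j,T_j) > 0 for j = 1,…,n, where k_j is the conditional covariance recursion. Then k_n(T_n+εt, T_n+εs)/ε^{2H} converges, uniformly for (t,s) ∈ [0,1]² as ε → 0⁺, to k_H(t,s). In other words, the asymptotic covariance of the n-fold conditional fractional Brownian motion coincides with the covariance of the unconditioned fractional Brownian motion, independently of the past observations. -/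
open MeasureTheory Filter Topology Set

open Asymptotics

theorem condCov_symm {k : ℝ → ℝ → ℝ} (hk : ∀ t s, k t s = k s t) (T : ℕ → ℝ) (j : ℕ) (t s : ℝ) :
    condCov k T j t s = condCov k T j s t := by
  induction j generalizing t s with
  | zero => exact hk t s
  | succ j ih =>
    simp only [condCov]
    rw [ih t s]
    ring

/-- The conditioned covariance vanishes at the last conditioning time. -/
theorem condCov_succ_apply_left {k : ℝ → ℝ → ℝ} (hk : ∀ t s, k t s = k s t) (T : ℕ → ℝ) (j : ℕ)
    (hj : condCov k T j (T (j + 1)) (T (j + 1)) ≠ 0) (s : ℝ) :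
    condCov k T (j + 1) (T (j + 1)) s = 0 := by
  simp only [condCov]
  rw [div_self hj, one_mul, condCov_symm hk T j s, sub_self]

theorem isLittleO_rpow_rpow_nhdsGE_zero {p q : ℝ} (hq : 0 < q) (hqp : q < p) :
    (fun a : ℝ => a ^ p) =o[𝓝[≥] 0] fun a => a ^ q := by
  have hzero : (fun a : ℝ => a ^ (p - q)) =o[𝓝[≥] 0] fun _ => (1 : ℝ) := by
    rw [isLittleO_one_iff]
    have hcont : ContinuousAt (fun a : ℝ => a ^ (p - q)) 0 :=
      Real.continuousAt_rpow_const _ _ (Or.inr (sub_pos.2 hqp).le)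
    have hlim := hcont.tendsto
    rw [Real.zero_rpow (sub_pos.2 hqp).ne'] at hlim
    exact hlim.mono_left nhdsWithin_le_nhds
  refine (hzero.mul_isBigO (isBigO_refl (fun a : ℝ => a ^ q) _)).congr' ?_ ?_
  · filter_upwards [self_mem_nhdsWithin] with a ha
    rw [← Real.rpow_add_of_nonneg ha (sub_pos.2 hqp).le hq.le, sub_add_cancel]
  · exact Eventually.of_forall fun a => one_mul _

theorem DifferentiableAt.isLittleO_sub_rpow {f : ℝ → ℝ} {τ H : ℝ} (hf : DifferentiableAt ℝ f τ)
    (hH0 : 0 < H) (hH1 : H < 1) :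
    (fun a => f (τ + a) - f τ) =o[𝓝[≥] 0] fun a => a ^ H := by
  have hlim : Tendsto (fun a : ℝ => τ + a) (𝓝[≥] 0) (𝓝 τ) := by
    have hcont : Tendsto (fun a : ℝ => τ + a) (𝓝 0) (𝓝 (τ + 0)) :=
      (continuous_const_add τ).tendsto 0
    rw [add_zero] at hcont
    exact hcont.mono_left nhdsWithin_le_nhds
  have hbig := hf.isBigO_sub.comp_tendsto hlim
  refine hbig.trans_isLittleO ?_
  simpa [Function.comp_def] using isLittleO_rpow_rpow_nhdsGE_zero hH0 hH1

theorem fbmCov_symm (H t s : ℝ) : fbmCov H t s = fbmCov H s t := by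
  unfold fbmCov
  rw [abs_sub_comm]
  ring

theorem fbmCov_increment_isLittleO {H τ : ℝ} (hH0 : 0 < H) (hH1 : H < 1) (hτ : 0 < τ) (S : ℝ) :
    (fun a => fbmCov H (τ + a) S - fbmCov H τ S) =o[𝓝[≥] 0] fun a => a ^ H := by
  have hleft : (fun a => (τ + a) ^ (2 * H) - τ ^ (2 * H)) =o[𝓝[≥] 0] fun a => a ^ H :=
    DifferentiableAt.isLittleO_sub_rpow (f := fun t => t ^ (2 * H))
      (Real.differentiableAt_rpow_const_of_ne _ hτ.ne') hH0 hH1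
  have hright : (fun a => |τ + a - S| ^ (2 * H) - |τ - S| ^ (2 * H)) =o[𝓝[≥] 0]
      fun a => a ^ H := by
    rcases eq_or_ne τ S with rfl | hne
    · refine (isLittleO_rpow_rpow_nhdsGE_zero hH0 (by linarith : H < 2 * H)).congr' ?_ .rfl
      filter_upwards [self_mem_nhdsWithin] with a ha
      rw [add_sub_cancel_left, sub_self, abs_zero, Real.zero_rpow (by positivity), sub_zero,
        abs_of_nonneg ha]
    · have hne' : τ - S ≠ 0 := sub_ne_zero.2 hne
      have habs : DifferentiableAt ℝ (fun t : ℝ => |t - S|) τ :=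
        (differentiableAt_id.sub_const S).abs hne'
      exact DifferentiableAt.isLittleO_sub_rpow (f := fun t => |t - S| ^ (2 * H))
        (habs.rpow_const (Or.inl (abs_ne_zero.2 hne'))) hH0 hH1
  refine ((hleft.sub hright).const_mul_left (1 / 2)).congr_left fun a => ?_
  unfold fbmCov
  ring

theorem condCov_increment_isLittleO {k : ℝ → ℝ → ℝ} {τ : ℝ} {l : Filter ℝ} {g : ℝ → ℝ}
    (hk : ∀ S, (fun a => k (τ + a) S - k τ S) =o[l] g) (T : ℕ → ℝ) (j : ℕ) (S : ℝ) :
    (fun a => condCov k T j (τ + a) S - condCov k T j τ S) =o[l] g := by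
  induction j generalizing S with
  | zero => exact hk S
  | succ j ih =>
    refine ((ih S).sub ((ih (T (j + 1))).const_mul_left
      (condCov k T j S (T (j + 1)) / condCov k T j (T (j + 1)) (T (j + 1))))).congr_left
        fun a => ?_
    simp only [condCov]
    ring

/-- The covariance of the increments `X (τ + a) - X τ` and `X (τ + b) - X τ`, where `X` has
covariance function `k`. -/
def incrementCov (k : ℝ → ℝ → ℝ) (τ a b : ℝ) : ℝ :=
  k (τ + a) (τ + b) - k (τ + a) τ - k τ (τ + b) + k τ τ

/-- Conditioning changes the covariance of the increments only by products of negligible terms. -/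
theorem incrementCov_condCov_sub_isLittleO {k : ℝ → ℝ → ℝ} {τ : ℝ} {l : Filter ℝ} {g : ℝ → ℝ}
    (hk : ∀ S, (fun a => k (τ + a) S - k τ S) =o[l] g) (T : ℕ → ℝ) (j : ℕ) :
    (fun p : ℝ × ℝ => incrementCov (condCov k T j) τ p.1 p.2 - incrementCov k τ p.1 p.2)
      =o[l ×ˢ l] fun p => g p.1 * g p.2 := by
  induction j with
  | zero => simp [condCov]
  | succ j ih =>
    have hinc := condCov_increment_isLittleO hk T j (T (j + 1))
    have hprod := (hinc.comp_tendsto (tendsto_fst (f := l) (g := l))).mul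
      (hinc.comp_tendsto (tendsto_snd (f := l) (g := l)))
    refine (ih.sub (hprod.const_mul_left
      (1 / condCov k T j (T (j + 1)) (T (j + 1))))).congr_left fun p => ?_
    simp only [condCov, incrementCov, Function.comp_apply]
    ring

/-- Fractional Brownian motion has stationary increments. -/
theorem incrementCov_fbmCov {H τ a b : ℝ} (hH : 0 < H) (ha : 0 ≤ a) (hb : 0 ≤ b) :
    incrementCov (fbmCov H) τ a b = fbmCov H a b := by
  have hdiff : τ + a - (τ + b) = a - b := by ring
  have hleft : τ + a - τ = a := by ring
  have hright : τ - (τ + b) = -b := by ring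
  unfold incrementCov fbmCov
  rw [hdiff, hleft, hright, abs_neg, abs_of_nonneg ha, abs_of_nonneg hb, sub_self, abs_zero,
    Real.zero_rpow (by positivity)]
  ring

/-- Fractional Brownian motion is self-similar. -/
theorem fbmCov_mul {H ε t s : ℝ} (hε : 0 ≤ ε) (ht : 0 ≤ t) (hs : 0 ≤ s) :
    fbmCov H (ε * t) (ε * s) = ε ^ (2 * H) * fbmCov H t s := by
  unfold fbmCov
  rw [← mul_sub, abs_mul, abs_of_nonneg hε, Real.mul_rpow hε ht, Real.mul_rpow hε hs,
    Real.mul_rpow hε (abs_nonneg _)]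
  ring

/-- For fractional Brownian motion, the covariance of the `n`-fold conditional process,
rescaled by `ε^{2H}`, converges uniformly on `[0,1]²` to the covariance of the
unconditioned fBm: the asymptotics do not depend on the past observations. -/
theorem fbm_conditional_covariance_asymptotics
    (H : ℝ) (hH : H ∈ Ioo (0:ℝ) 1) (T : ℕ → ℝ) (n : ℕ)
    (hn : 1 ≤ n)
    (hT1 : 0 < T 1)
    (hTmono : ∀ j, 1 ≤ j → j + 1 ≤ n → T j < T (j + 1))
    (hpos : ∀ j < n, 0 < condCov (fbmCov H) T j (T (j + 1)) (T (j + 1))) :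
    TendstoUniformlyOn
      (fun ε (p : ℝ × ℝ) =>
        condCov (fbmCov H) T n (T n + ε * p.1) (T n + ε * p.2) / ε ^ (2*H))
      (fun p => fbmCov H p.1 p.2) (𝓝[>] (0:ℝ)) (Icc 0 1 ×ˢ Icc 0 1) := by
  obtain ⟨hH0, hH1⟩ := hH
  have hTpos : ∀ j, 1 ≤ j → j ≤ n → 0 < T j := by
    intro j hj
    induction j, hj using Nat.le_induction with
    | base => exact fun _ => hT1
    | succ j hj ih => exact fun hjn => (ih (by omega)).trans (hTmono j hj hjn)
  have hτ : 0 < T n := hTpos n hn le_rfl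
  have hvanish : ∀ s, condCov (fbmCov H) T n (T n) s = 0 := by
    obtain ⟨m, rfl⟩ := Nat.exists_eq_add_of_le' hn
    exact condCov_succ_apply_left (fbmCov_symm H) T m (hpos m m.lt_succ_self).ne'
  have hsmall := incrementCov_condCov_sub_isLittleO
    (fbmCov_increment_isLittleO hH0 hH1 hτ) T n
  rw [Metric.tendstoUniformlyOn_iff]
  intro δ hδ
  have hev := hsmall.bound (half_pos hδ)
  obtain ⟨u, hu, hbound⟩ := eventually_prod_self_iff'.1 hev
  obtain ⟨η, hη, hηu⟩ := Metric.mem_nhdsWithin_iff.1 hu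
  filter_upwards [Ioo_mem_nhdsGT hη] with ε hε p hp
  obtain ⟨⟨ht0, ht1⟩, hs0, hs1⟩ := hp
  have hε0 : 0 < ε := hε.1
  have hscale : ∀ t : ℝ, 0 ≤ t → t ≤ 1 → 0 ≤ ε * t ∧ ε * t ≤ ε ∧ ε * t ∈ u := by
    intro t h0 h1
    have hnonneg : 0 ≤ ε * t := mul_nonneg hε0.le h0
    have hle : ε * t ≤ ε := mul_le_of_le_one_right hε0.le h1
    refine ⟨hnonneg, hle, hηu ⟨?_, hnonneg⟩⟩
    rw [Metric.mem_ball, dist_zero_right, Real.norm_of_nonneg hnonneg]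
    exact hle.trans_lt hε.2
  obtain ⟨ha0, haε, hau⟩ := hscale p.1 ht0 ht1
  obtain ⟨hb0, hbε, hbu⟩ := hscale p.2 hs0 hs1
  have hest := hbound _ hau _ hbu
  have hinc : incrementCov (condCov (fbmCov H) T n) (T n) (ε * p.1) (ε * p.2) =
      condCov (fbmCov H) T n (T n + ε * p.1) (T n + ε * p.2) := by
    rw [incrementCov, condCov_symm (fbmCov_symm H) T n _ (T n), hvanish, hvanish, hvanish]
    ring
  simp only [hinc, incrementCov_fbmCov hH0 ha0 hb0, fbmCov_mul hε0.le ht0 hs0] at hest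
  have hpow : 0 < ε ^ (2 * H) := Real.rpow_pos_of_pos hε0 _
  have hnorm : ‖(ε * p.1) ^ H * (ε * p.2) ^ H‖ ≤ ε ^ (2 * H) := by
    rw [Real.norm_of_nonneg (by positivity), two_mul, Real.rpow_add hε0]
    gcongr
  rw [dist_comm, Real.dist_eq, div_sub' hpow.ne', abs_div, abs_of_pos hpow, div_lt_iff₀ hpow]
  calc _ ≤ δ / 2 * ‖(ε * p.1) ^ H * (ε * p.2) ^ H‖ := hest
    _ ≤ δ / 2 * ε ^ (2 * H) := by gcongr
    _ < δ * ε ^ (2 * H) := by gcongr; linarith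
end

section
/- Let H ∈ (0,1) with H ≠ 1/2, let c, c_H be nonzero reals, and set k(t,s) = c²·min(t,s) + c_H²·k_H(t,s), where k_H(t,s) = (t^{2H} + s^{2H} − |t−s|^{2H})/2 (the covariance of c·B + c_H·B^H with B a Brownian motion and B^H an independent fractional Brownian motion). Fix T_n > 0 and let H' = min(H, 1/2) and σ_H² = c² if H > 1/2, σ_H² = c_H² if H < 1/2. Then: (i) (k(T_n+εt,T_n+εs) − k(T_n+εt,T_n) − k(T_n,T_n+εs) + k(T_n,T_n))/ε^{2H'} converges, uniformly on [0,1]² as ε → 0⁺, to σ_H²·k_{H'}(t,s); and (ii) for every T > 0, lim_{ε→0⁺} sup_{t∈[0,1]} |k(T_n+εt,T) − k(T_n,T)|/ε^{H'} = 0. -/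
open MeasureTheory Filter Topology Set

/-- A power rate in `ε` that is uniform in the parameter yields uniform convergence at `0⁺`. -/
theorem tendstoUniformlyOn_of_abs_sub_le_rpow {α : Type*} {F : ℝ → α → ℝ} {f : α → ℝ} {S : Set α}
    {C a : ℝ} (ha : 0 < a)
    (hF : ∀ ε : ℝ, 0 < ε → ε ≤ 1 → ∀ x ∈ S, |F ε x - f x| ≤ C * ε ^ a) :
    TendstoUniformlyOn F f (𝓝[>] (0:ℝ)) S := by
  rw [Metric.tendstoUniformlyOn_iff]
  intro δ hδ
  have hlim : Tendsto (fun ε : ℝ => C * ε ^ a) (𝓝[>] (0:ℝ)) (𝓝 0) := by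
    have h := (Real.continuousAt_rpow_const 0 a (Or.inr ha.le)).tendsto.const_mul C
    rw [Real.zero_rpow ha.ne', mul_zero] at h
    exact h.mono_left nhdsWithin_le_nhds
  filter_upwards [hlim.eventually_lt_const hδ, Ioc_mem_nhdsGT (zero_lt_one' ℝ)]
    with ε hε hε1 x hx
  rw [dist_comm, Real.dist_eq]
  exact (hF ε hε1.1 hε1.2 x hx).trans_lt hε

/-- The Brownian covariance is the fractional one with Hurst index `1/2`. -/
theorem min_eq_fbmCov_half (t s : ℝ) : min t s = fbmCov (1/2) t s := by
  rw [fbmCov, mul_one_div_cancel two_ne_zero, Real.rpow_one, Real.rpow_one, Real.rpow_one]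
  rcases le_total t s with h | h
  · rw [min_eq_left h, abs_of_nonpos (sub_nonpos.2 h)]
    ring
  · rw [min_eq_right h, abs_of_nonneg (sub_nonneg.2 h)]
    ring

/-- Stationary increments and self-similarity of fractional Brownian motion. -/
theorem fbmCov_second_difference {H ε t s : ℝ} (T : ℝ) (hH : 0 < H) (hε : 0 < ε) (ht : 0 ≤ t)
    (hs : 0 ≤ s) :
    fbmCov H (T + ε * t) (T + ε * s) - fbmCov H (T + ε * t) T - fbmCov H T (T + ε * s)
      + fbmCov H T T = ε ^ (2*H) * fbmCov H t s := by
  have h1 : |T + ε * t - (T + ε * s)| = ε * |t - s| := by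
    rw [← abs_of_pos hε, ← abs_mul, abs_of_pos hε]
    ring_nf
  have h2 : |T + ε * t - T| = ε * t := by
    rw [add_sub_cancel_left, abs_of_nonneg (by positivity)]
  have h3 : |T - (T + ε * s)| = ε * s := by
    rw [sub_add_cancel_left, abs_neg, abs_of_nonneg (by positivity)]
  simp only [fbmCov, h1, h2, h3, sub_self, abs_zero]
  rw [Real.zero_rpow (by positivity), Real.mul_rpow hε.le (abs_nonneg _),
    Real.mul_rpow hε.le ht, Real.mul_rpow hε.le hs]
  ring

theorem abs_fbmCov_le_one {H t s : ℝ} (hH : 0 < H) (ht : t ∈ Icc (0:ℝ) 1) (hs : s ∈ Icc (0:ℝ) 1) :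
    |fbmCov H t s| ≤ 1 := by
  have hp : (0:ℝ) ≤ 2 * H := by positivity
  have hts : |t - s| ≤ 1 := abs_sub_le_iff.2 ⟨by linarith [ht.2, hs.1], by linarith [hs.2, ht.1]⟩
  have h1 := Real.rpow_le_one ht.1 ht.2 hp
  have h2 := Real.rpow_le_one hs.1 hs.2 hp
  have h3 := Real.rpow_le_one (abs_nonneg _) hts hp
  have h4 := Real.rpow_nonneg ht.1 (2 * H)
  have h5 := Real.rpow_nonneg hs.1 (2 * H)
  have h6 := Real.rpow_nonneg (abs_nonneg (t - s)) (2 * H)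
  rw [fbmCov, abs_le]
  constructor <;> linarith

/-- On a bounded interval of nonnegative reals, `x ↦ x ^ p` is Hölder of order `min p 1`. -/
theorem exists_abs_rpow_sub_rpow_le {p : ℝ} (R : ℝ) (hp : 0 < p) :
    ∃ C, 0 ≤ C ∧ ∀ x ∈ Icc 0 R, ∀ y ∈ Icc 0 R, |x ^ p - y ^ p| ≤ C * |x - y| ^ min p 1 := by
  rcases le_total p 1 with h | h
  · refine ⟨1, zero_le_one, fun x hx y hy => ?_⟩
    rw [min_eq_left h, one_mul]
    have key : ∀ {u v : ℝ}, 0 ≤ v → v ≤ u → |u ^ p - v ^ p| ≤ |u - v| ^ p := by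
      intro u v hv huv
      have hadd := Real.rpow_add_le_add_rpow (sub_nonneg.2 huv) hv hp.le h
      rw [sub_add_cancel] at hadd
      rw [abs_of_nonneg (sub_nonneg.2 (Real.rpow_le_rpow hv huv hp.le)),
        abs_of_nonneg (sub_nonneg.2 huv)]
      linarith
    rcases le_total x y with hxy | hxy
    · rw [abs_sub_comm, abs_sub_comm x]
      exact key hx.1 hxy
    · exact key hy.1 hxy
  · refine ⟨p * |R| ^ (p - 1), by positivity, fun x hx y hy => ?_⟩
    rw [min_eq_right h, Real.rpow_one]
    refine Convex.norm_image_sub_le_of_norm_hasDerivWithin_le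
      (f := fun z : ℝ => z ^ p) (f' := fun z => p * z ^ (p - 1)) (s := Icc 0 R)
      (fun z _ => (Real.hasDerivAt_rpow_const (Or.inr h)).hasDerivWithinAt)
      (fun z hz => ?_) (convex_Icc 0 R) hy hx
    rw [Real.norm_of_nonneg (mul_nonneg hp.le (Real.rpow_nonneg hz.1 _))]
    exact mul_le_mul_of_nonneg_left
      (Real.rpow_le_rpow hz.1 (hz.2.trans (le_abs_self R)) (sub_nonneg.2 h)) hp.le

/-- The increment of `fbmCov H · T` over `[S, S + ε]` is of order `ε ^ min (2H) 1`. -/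
theorem exists_abs_fbmCov_increment_le {H S T : ℝ} (hH : 0 < H) (hS : 0 < S) (hT : 0 < T) :
    ∃ C, 0 ≤ C ∧ ∀ ε : ℝ, 0 < ε → ε ≤ 1 → ∀ t ∈ Icc (0:ℝ) 1,
      |fbmCov H (S + ε * t) T - fbmCov H S T| ≤ C * ε ^ min (2*H) 1 := by
  obtain ⟨C, hC, hCb⟩ := exists_abs_rpow_sub_rpow_le (S + T + 1) (p := 2 * H) (by positivity)
  refine ⟨C, hC, fun ε hε hε1 t ht => ?_⟩
  have h0 : 0 ≤ ε * t := mul_nonneg hε.le ht.1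
  have hle : ε * t ≤ ε := mul_le_of_le_one_right hε.le ht.2
  have hm : 0 ≤ min (2*H) 1 := by positivity
  have bound : ∀ x ∈ Icc 0 (S + T + 1), ∀ y ∈ Icc 0 (S + T + 1), |x - y| ≤ ε →
      |x ^ (2*H) - y ^ (2*H)| ≤ C * ε ^ min (2*H) 1 := fun x hx y hy hxy =>
    (hCb x hx y hy).trans
      (mul_le_mul_of_nonneg_left (Real.rpow_le_rpow (abs_nonneg _) hxy hm) hC)
  have h1 := bound (S + ε * t) ⟨by linarith, by linarith⟩ S ⟨hS.le, by linarith⟩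
    (by rwa [add_sub_cancel_left, abs_of_nonneg h0])
  have h2 := bound |S + ε * t - T|
    ⟨abs_nonneg _, abs_sub_le_iff.2 ⟨by linarith, by linarith⟩⟩ |S - T|
    ⟨abs_nonneg _, abs_sub_le_iff.2 ⟨by linarith, by linarith⟩⟩
    ((abs_abs_sub_abs_le _ _).trans
      (by rwa [sub_sub_sub_cancel_right, add_sub_cancel_left, abs_of_nonneg h0]))
  rw [abs_le] at h1 h2 ⊢
  simp only [fbmCov]
  constructor <;> linarith [h1.1, h1.2, h2.1, h2.2]

/-- Assumptions GD and A for the Cheridito mixture `c·B + c_H·B^H` of a Brownian motion and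
an independent fractional Brownian motion, with `γ_ε = ε^{min(H,1/2)}`:
(i) the rescaled second difference converges uniformly to `σ_H² k_{H∧1/2}`;
(ii) the rescaled increment in the first variable tends to `0` uniformly. -/
theorem cheridito_assumptions
    (H c cH Tn : ℝ) (hH : H ∈ Ioo (0:ℝ) 1) (hH' : H ≠ 1/2)
    (hc : c ≠ 0) (hcH : cH ≠ 0) (hTn : 0 < Tn) :
    (TendstoUniformlyOn
      (fun ε (p : ℝ × ℝ) =>
        ((c^2 * min (Tn + ε * p.1) (Tn + ε * p.2) + cH^2 * fbmCov H (Tn + ε * p.1) (Tn + ε * p.2)) -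
         (c^2 * min (Tn + ε * p.1) Tn + cH^2 * fbmCov H (Tn + ε * p.1) Tn) -
         (c^2 * min Tn (Tn + ε * p.2) + cH^2 * fbmCov H Tn (Tn + ε * p.2)) +
         (c^2 * min Tn Tn + cH^2 * fbmCov H Tn Tn)) / ε ^ (2 * min H (1/2)))
      (fun p => (if 1/2 < H then c^2 else cH^2) * fbmCov (min H (1/2)) p.1 p.2)
      (𝓝[>] (0:ℝ)) (Icc 0 1 ×ˢ Icc 0 1)) ∧
    (∀ T : ℝ, 0 < T → TendstoUniformlyOn
      (fun ε t =>
        |(c^2 * min (Tn + ε * t) T + cH^2 * fbmCov H (Tn + ε * t) T) -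
         (c^2 * min Tn T + cH^2 * fbmCov H Tn T)| / ε ^ (min H (1/2)))
      (fun _ => 0) (𝓝[>] (0:ℝ)) (Icc 0 1)) := by
  have hH0 : 0 < H := hH.1
  have hhalf : (0:ℝ) < 1/2 := one_half_pos
  refine ⟨?_, fun T hT => ?_⟩
  · have decomp : ∀ ε : ℝ, 0 < ε → ∀ p ∈ Icc (0:ℝ) 1 ×ˢ Icc (0:ℝ) 1,
        (c^2 * min (Tn + ε * p.1) (Tn + ε * p.2) + cH^2 * fbmCov H (Tn + ε * p.1) (Tn + ε * p.2)) -
         (c^2 * min (Tn + ε * p.1) Tn + cH^2 * fbmCov H (Tn + ε * p.1) Tn) -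
         (c^2 * min Tn (Tn + ε * p.2) + cH^2 * fbmCov H Tn (Tn + ε * p.2)) +
         (c^2 * min Tn Tn + cH^2 * fbmCov H Tn Tn) =
        c^2 * (ε ^ (2 * (1/2) : ℝ) * fbmCov (1/2) p.1 p.2) +
          cH^2 * (ε ^ (2 * H) * fbmCov H p.1 p.2) := by
      rintro ε hε p ⟨hp1, hp2⟩
      rw [← fbmCov_second_difference Tn hhalf hε hp1.1 hp2.1,
        ← fbmCov_second_difference Tn hH0 hε hp1.1 hp2.1]
      simp only [min_eq_fbmCov_half (Tn + _), min_eq_fbmCov_half Tn]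
      ring
    rcases lt_or_gt_of_ne hH' with h | h
    · refine tendstoUniformlyOn_of_abs_sub_le_rpow (C := c^2) (a := 2 * (1/2) - 2 * H)
        (by linarith) fun ε hε _ p hp => ?_
      rw [decomp ε hε p hp, min_eq_left h.le, if_neg h.not_gt, Real.rpow_sub hε]
      have hne : ε ^ (2 * H) ≠ 0 := (Real.rpow_pos_of_pos hε _).ne'
      have hb := abs_fbmCov_le_one hhalf hp.1 hp.2
      calc _ = |c^2 * (ε ^ (2 * (1/2) : ℝ) / ε ^ (2 * H)) * fbmCov (1/2) p.1 p.2| := by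
            congr 1
            field_simp
            ring
        _ ≤ _ := by
            rw [abs_mul, abs_of_nonneg (by positivity)]
            exact mul_le_of_le_one_right (by positivity) hb
    · refine tendstoUniformlyOn_of_abs_sub_le_rpow (C := cH^2) (a := 2 * H - 2 * (1/2))
        (by linarith) fun ε hε _ p hp => ?_
      rw [decomp ε hε p hp, min_eq_right h.le, if_pos h, Real.rpow_sub hε]
      generalize hq : ε ^ (2 * (1/2) : ℝ) = q
      have hq0 : 0 < q := hq ▸ Real.rpow_pos_of_pos hε _
      have hb := abs_fbmCov_le_one hH0 hp.1 hp.2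
      calc _ = |cH^2 * (ε ^ (2 * H) / q) * fbmCov H p.1 p.2| := by
            congr 1
            field_simp
            ring
        _ ≤ _ := by
            rw [abs_mul, abs_of_nonneg (by positivity)]
            exact mul_le_of_le_one_right (by positivity) hb
  · obtain ⟨C₁, hC₁, hB⟩ := exists_abs_fbmCov_increment_le hhalf hTn hT
    obtain ⟨C₂, hC₂, hF⟩ := exists_abs_fbmCov_increment_le hH0 hTn hT
    have hm : min H (1/2) < min (2 * H) 1 :=
      lt_min ((min_le_left _ _).trans_lt (by linarith))
        ((min_le_right _ _).trans_lt one_half_lt_one)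
    refine tendstoUniformlyOn_of_abs_sub_le_rpow (C := c^2 * C₁ + cH^2 * C₂)
      (a := min (2 * H) 1 - min H (1/2)) (sub_pos.2 hm) fun ε hε hε1 t ht => ?_
    have hpos := Real.rpow_pos_of_pos hε (min H (1/2))
    rw [sub_zero, abs_of_nonneg (by positivity), Real.rpow_sub hε, ← mul_div_assoc]
    refine div_le_div_of_nonneg_right ?_ hpos.le
    have h1 : |fbmCov (1/2) (Tn + ε * t) T - fbmCov (1/2) Tn T| ≤ C₁ * ε ^ min (2 * H) 1 :=
      (hB ε hε hε1 t ht).trans (mul_le_mul_of_nonneg_left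
        (Real.rpow_le_rpow_of_exponent_ge hε hε1 (by norm_num)) hC₁)
    have h2 := hF ε hε hε1 t ht
    rw [min_eq_fbmCov_half _ T, min_eq_fbmCov_half _ T]
    calc _ = |c^2 * (fbmCov (1/2) (Tn + ε * t) T - fbmCov (1/2) Tn T) +
            cH^2 * (fbmCov H (Tn + ε * t) T - fbmCov H Tn T)| := by
          congr 1
          ring
      _ ≤ c^2 * |fbmCov (1/2) (Tn + ε * t) T - fbmCov (1/2) Tn T| +
            cH^2 * |fbmCov H (Tn + ε * t) T - fbmCov H Tn T| := by
          refine (abs_add_le _ _).trans_eq ?_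
          rw [abs_mul, abs_mul, abs_of_nonneg (sq_nonneg c), abs_of_nonneg (sq_nonneg cH)]
      _ ≤ c^2 * (C₁ * ε ^ min (2 * H) 1) + cH^2 * (C₂ * ε ^ min (2 * H) 1) := by gcongr
      _ = _ := by ring
end

section
/- Let κ : [0,∞)×[0,∞) → ℝ be continuous and let k(t,s) = ∫_0^t ∫_0^s κ(u,v) du dv (the covariance of the integrated Gaussian process X_t = ∫_0^t Z_u du when κ is the covariance of Z). Fix T_n > 0. Then: (i) (k(T_n+εt,T_n+εs) − k(T_n+εt,T_n) − k(T_n,T_n+εs) + k(T_n,T_n))/ε² converges, uniformly for (t,s) ∈ [0,1]² as ε → 0⁺, to t·s·κ(T_n,T_n); and (ii) for every T > 0, (k(T_n+εt,T) − k(T_n,T))/ε converges, uniformly in t ∈ [0,1] as ε → 0⁺, to t·∫_0^T κ(T_n,v) dv. -/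
open MeasureTheory Filter Topology Set

/-- The covariance function `k(t,s) = ∫_0^t ∫_0^s κ(u,v) dv du` of the integrated Gaussian
process `X_t = ∫_0^t Z_u du`, where `κ` is the covariance of `Z`. -/
noncomputable def intCov (κ : ℝ → ℝ → ℝ) (t s : ℝ) : ℝ :=
  ∫ u in (0:ℝ)..t, ∫ v in (0:ℝ)..s, κ u v

/-- The value of `intCov` on the positive quadrant only depends on `κ` there. -/
lemma intCov_congr {κ K : ℝ → ℝ → ℝ} (h : ∀ u v, 0 ≤ u → 0 ≤ v → κ u v = K u v) {t s : ℝ}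
    (ht : 0 ≤ t) (hs : 0 ≤ s) : intCov κ t s = intCov K t s := by
  refine intervalIntegral.integral_congr fun u hu => intervalIntegral.integral_congr fun v hv => ?_
  rw [uIcc_of_le ht] at hu
  rw [uIcc_of_le hs] at hv
  exact h u v hu.1 hv.1

/-- If `g` is within `δ` of `c` on `[a, a + h]`, its integral there is within `δ * h` of `h * c`. -/
lemma abs_integral_sub_le {g : ℝ → ℝ} (hg : Continuous g) {a h c δ : ℝ} (hh : 0 ≤ h)
    (hδ : ∀ u ∈ Icc a (a + h), |g u - c| ≤ δ) :
    |(∫ u in a..(a + h), g u) - h * c| ≤ δ * h := by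
  have h1 : (∫ u in a..(a + h), g u) - h * c = ∫ u in a..(a + h), (g u - c) := by
    rw [intervalIntegral.integral_sub (hg.intervalIntegrable _ _)
      (continuous_const.intervalIntegrable _ _)]
    simp
  rw [h1]
  have h2 := intervalIntegral.norm_integral_le_of_norm_le_const (a := a) (b := a + h)
    (f := fun u => g u - c) (C := δ) fun u hu => by
      rw [uIoc_of_le (by linarith)] at hu
      exact hδ u ⟨hu.1.le, hu.2⟩
  simpa [abs_of_nonneg hh] using h2

lemma continuous_integral_right {K : ℝ → ℝ → ℝ} (hK : Continuous (Function.uncurry K))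
    (a b : ℝ) : Continuous fun u => ∫ v in a..b, K u v :=
  intervalIntegral.continuous_parametric_intervalIntegral_of_continuous' hK a b

lemma intCov_sub_left {K : ℝ → ℝ → ℝ} (hK : Continuous (Function.uncurry K)) (a b s : ℝ) :
    intCov K b s - intCov K a s = ∫ u in a..b, ∫ v in (0:ℝ)..s, K u v :=
  intervalIntegral.integral_interval_sub_left
    ((continuous_integral_right hK 0 s).intervalIntegrable _ _)
    ((continuous_integral_right hK 0 s).intervalIntegrable _ _)

/-- The rectangular increment of `intCov` is the integral over the rectangle. -/
lemma intCov_rectangle {K : ℝ → ℝ → ℝ} (hK : Continuous (Function.uncurry K)) (a b c d : ℝ) :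
    intCov K b d - intCov K b c - intCov K a d + intCov K a c =
      ∫ u in a..b, ∫ v in c..d, K u v := by
  have h1 : intCov K b d - intCov K b c - intCov K a d + intCov K a c =
      (intCov K b d - intCov K a d) - (intCov K b c - intCov K a c) := by ring
  rw [h1, intCov_sub_left hK, intCov_sub_left hK, ← intervalIntegral.integral_sub
    ((continuous_integral_right hK 0 d).intervalIntegrable _ _)
    ((continuous_integral_right hK 0 c).intervalIntegrable _ _)]
  refine intervalIntegral.integral_congr fun u _ => ?_
  have hu : Continuous (K u) := hK.comp (Continuous.prodMk_right u)
  exact intervalIntegral.integral_interval_sub_left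
    (hu.intervalIntegrable _ _) (hu.intervalIntegrable _ _)

lemma tendstoUniformlyOn_intCov_rectangle {K : ℝ → ℝ → ℝ}
    (hK : Continuous (Function.uncurry K)) (a : ℝ) :
    TendstoUniformlyOn
      (fun ε (p : ℝ × ℝ) =>
        (intCov K (a + ε * p.1) (a + ε * p.2) - intCov K (a + ε * p.1) a -
          intCov K a (a + ε * p.2) + intCov K a a) / ε ^ 2)
      (fun p => p.1 * p.2 * K a a) (𝓝[>] (0:ℝ)) (Icc 0 1 ×ˢ Icc 0 1) := by
  rw [Metric.tendstoUniformlyOn_iff]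
  intro e he
  obtain ⟨r, hr, hball⟩ := Metric.continuous_iff.1 hK (a, a) (e / 2) (half_pos he)
  filter_upwards [Ioo_mem_nhdsGT hr] with ε hε p hp
  obtain ⟨⟨ht0, ht1⟩, hs0, hs1⟩ := hp
  obtain ⟨hε0, hεr⟩ := hε
  have ht : 0 ≤ ε * p.1 := by positivity
  have hs : 0 ≤ ε * p.2 := by positivity
  have ht' : ε * p.1 ≤ ε := mul_le_of_le_one_right hε0.le ht1
  have hs' : ε * p.2 ≤ ε := mul_le_of_le_one_right hε0.le hs1
  have hclose : ∀ u ∈ Icc a (a + ε * p.1), ∀ v ∈ Icc a (a + ε * p.2),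
      |K u v - K a a| ≤ e / 2 := fun u hu v hv => by
    refine (hball (u, v) ?_).le
    rw [Prod.dist_eq, max_lt_iff, Real.dist_eq, Real.dist_eq, abs_of_nonneg (sub_nonneg.2 hu.1),
      abs_of_nonneg (sub_nonneg.2 hv.1)]
    exact ⟨by linarith [hu.2], by linarith [hv.2]⟩
  have hint := abs_integral_sub_le (continuous_integral_right hK a (a + ε * p.2)) ht
    fun u hu => abs_integral_sub_le (hK.comp (Continuous.prodMk_right u)) hs (hclose u hu)
  rw [intCov_rectangle hK, dist_comm, Real.dist_eq]
  have hε2 : 0 < ε ^ 2 := by positivity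
  have hrw : (∫ u in a..(a + ε * p.1), ∫ v in a..(a + ε * p.2), K u v) / ε ^ 2
      - p.1 * p.2 * K a a =
      ((∫ u in a..(a + ε * p.1), ∫ v in a..(a + ε * p.2), K u v)
        - ε * p.1 * (ε * p.2 * K a a)) / ε ^ 2 := by
    field_simp
  rw [hrw, abs_div, abs_of_pos hε2, div_lt_iff₀ hε2]
  calc _ ≤ e / 2 * (ε * p.2) * (ε * p.1) := hint
    _ ≤ e / 2 * ε * ε := by gcongr
    _ < e * ε ^ 2 := by nlinarith [mul_pos he hε2]

lemma tendstoUniformlyOn_intCov_left {K : ℝ → ℝ → ℝ}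
    (hK : Continuous (Function.uncurry K)) (a s : ℝ) :
    TendstoUniformlyOn
      (fun ε t => (intCov K (a + ε * t) s - intCov K a s) / ε)
      (fun t => t * ∫ v in (0:ℝ)..s, K a v) (𝓝[>] (0:ℝ)) (Icc 0 1) := by
  rw [Metric.tendstoUniformlyOn_iff]
  intro e he
  have hG := continuous_integral_right hK 0 s
  obtain ⟨r, hr, hball⟩ := Metric.continuous_iff.1 hG a (e / 2) (half_pos he)
  filter_upwards [Ioo_mem_nhdsGT hr] with ε hε t ht
  obtain ⟨hε0, hεr⟩ := hε
  have hεt : 0 ≤ ε * t := mul_nonneg hε0.le ht.1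
  have hεt' : ε * t ≤ ε := mul_le_of_le_one_right hε0.le ht.2
  have hint := abs_integral_sub_le hG (a := a) (δ := e / 2) hεt fun u hu => by
    refine (hball u ?_).le
    rw [Real.dist_eq, abs_of_nonneg (sub_nonneg.2 hu.1)]
    linarith [hu.2]
  rw [intCov_sub_left hK, dist_comm, Real.dist_eq]
  have hrw : (∫ u in a..(a + ε * t), ∫ v in (0:ℝ)..s, K u v) / ε
      - t * (∫ v in (0:ℝ)..s, K a v) =
      ((∫ u in a..(a + ε * t), ∫ v in (0:ℝ)..s, K u v)
        - ε * t * ∫ v in (0:ℝ)..s, K a v) / ε := by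
    field_simp
  rw [hrw, abs_div, abs_of_pos hε0, div_lt_iff₀ hε0]
  calc _ ≤ e / 2 * (ε * t) := hint
    _ ≤ e / 2 * ε := by gcongr
    _ < e * ε := by nlinarith [mul_pos he hε0]

/-- Assumptions GD and A for integrated Gaussian processes, with `γ_ε = ε`:
(i) the rescaled second difference of `k` converges uniformly on `[0,1]²` to `ts·κ(T_n,T_n)`;
(ii) the rescaled increment converges uniformly on `[0,1]` to `t·∫_0^T κ(T_n,v) dv`. -/
theorem integrated_assumptions
    (κ : ℝ → ℝ → ℝ) (Tn : ℝ)
    (hκ : ContinuousOn (fun p : ℝ × ℝ => κ p.1 p.2) (Ici 0 ×ˢ Ici 0))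
    (hTn : 0 < Tn) :
    (TendstoUniformlyOn
      (fun ε (p : ℝ × ℝ) =>
        (intCov κ (Tn + ε * p.1) (Tn + ε * p.2) - intCov κ (Tn + ε * p.1) Tn -
          intCov κ Tn (Tn + ε * p.2) + intCov κ Tn Tn) / ε ^ 2)
      (fun p => p.1 * p.2 * κ Tn Tn) (𝓝[>] (0:ℝ)) (Icc 0 1 ×ˢ Icc 0 1)) ∧
    (∀ T : ℝ, 0 < T → TendstoUniformlyOn
      (fun ε t => (intCov κ (Tn + ε * t) T - intCov κ Tn T) / ε)
      (fun t => t * ∫ v in (0:ℝ)..T, κ Tn v) (𝓝[>] (0:ℝ)) (Icc 0 1)) := by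
  set K : ℝ → ℝ → ℝ := fun u v => κ (max u 0) (max v 0) with hKdef
  have hK : Continuous (Function.uncurry K) :=
    hκ.comp_continuous (f := fun p : ℝ × ℝ => (max p.1 0, max p.2 0)) (by fun_prop)
      fun p => ⟨le_max_right p.1 0, le_max_right p.2 0⟩
  have hκK : ∀ u v, 0 ≤ u → 0 ≤ v → κ u v = K u v := fun u v hu hv => by
    simp only [hKdef, max_eq_left hu, max_eq_left hv]
  have hpos : ∀ ε ∈ Ioi (0:ℝ), ∀ t ∈ Icc (0:ℝ) 1, 0 ≤ Tn + ε * t := fun ε hε t ht =>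
    add_nonneg hTn.le (mul_nonneg (le_of_lt hε) ht.1)
  refine ⟨?_, fun T hT => ?_⟩
  · rw [hκK Tn Tn hTn.le hTn.le]
    refine (tendstoUniformlyOn_intCov_rectangle hK Tn).congr ?_
    filter_upwards [self_mem_nhdsWithin] with ε hε p hp
    have h1 := hpos ε hε p.1 hp.1
    have h2 := hpos ε hε p.2 hp.2
    simp only [intCov_congr hκK h1 h2, intCov_congr hκK h1 hTn.le, intCov_congr hκK hTn.le h2,
      intCov_congr hκK hTn.le hTn.le]
  · have hlim : ∫ v in (0:ℝ)..T, κ Tn v = ∫ v in (0:ℝ)..T, K Tn v :=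
      intervalIntegral.integral_congr fun v hv => by
        rw [uIcc_of_le hT.le] at hv
        exact hκK Tn v hTn.le hv.1
    rw [hlim]
    refine (tendstoUniformlyOn_intCov_left hK Tn T).congr ?_
    filter_upwards [self_mem_nhdsWithin] with ε hε t ht
    simp only [intCov_congr hκK (hpos ε hε t ht) hT.le, intCov_congr hκK hTn.le hT.le]
end

section
/- Let κ : [0,∞)×[0,∞) → ℝ be continuous, k(t,s) = ∫_0^t ∫_0^s κ(u,v) du dv, fix T_n > 0 and α ∈ (0,1]. Suppose: (i) there are a constant e and ĝ ∈ L¹([0,1]²) such that ‖κ(T_n+ε·, T_n+ε·) − κ(T_n,T_n) − ε·e·(u+v) − ε^{1+α} ĝ‖_{L¹([0,1]²)} = o(ε^{1+α}) as ε → 0⁺; and (ii) for every T > 0 there are a constant f(T) and g̃(·;T) ∈ L¹([0,1]) such that ‖∫_0^T κ(T_n+ε·, v) dv − ∫_0^T κ(T_n,v) dv − ε·u·f(T) − ε^{1+α} g̃(·;T)‖_{L¹([0,1])} = o(ε^{1+α}) as ε → 0⁺. Then, with φ̄(t,s) = ∫_0^t ∫_0^s ĝ(u,v) du dv and ψ̄(t;T)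 = ∫_0^t g̃(u;T) du: (a) k(T_n+εt,T_n+εs) − k(T_n+εt,T_n) − k(T_n,T_n+εs) + k(T_n,T_n) = ε²[κ(T_n,T_n)·ts + (e/2)(t²s+ts²)ε + φ̄(t,s)ε^{1+α} + R¹_ε(t,s)] with sup_{t,s∈[0,1]} |R¹_ε(t,s)|/ε^{1+α} → 0; and (b) for every T > 0, k(T_n+εt,T) − k(T_n,T) = ε[(∫_0^T κ(T_n,v)dv)·t + (f(T)/2)·t²·ε + ψ̄(t;T)ε^{1+α} + R²_ε(t;T)] with sup_{t∈[0,1]} |R²_ε(t;T)|/ε^{1+α} → 0. That is, Assumption R2 holds with a² = κ(T_n,T_n), b = e/2, c(T) = ∫_0^T κ(T_n,v)dv and d(T) = f(T)/2. -/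
open MeasureTheory Filter Topology Set

/-- An iterated interval integral over a subrectangle of the unit square is a set integral. -/
theorem iterated_integral_eq_setIntegral {F : ℝ × ℝ → ℝ}
    (hF : IntegrableOn F (Icc 0 1 ×ˢ Icc 0 1)) {t s : ℝ} (ht : t ∈ Icc (0:ℝ) 1)
    (hs : s ∈ Icc (0:ℝ) 1) :
    (∫ u in (0:ℝ)..t, ∫ v in (0:ℝ)..s, F (u, v)) = ∫ p in Ioc 0 t ×ˢ Ioc 0 s, F p := by
  have hsub : Ioc 0 t ×ˢ Ioc 0 s ⊆ Icc (0:ℝ) 1 ×ˢ Icc (0:ℝ) 1 :=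
    prod_mono (fun x hx => ⟨hx.1.le, hx.2.trans ht.2⟩) (fun x hx => ⟨hx.1.le, hx.2.trans hs.2⟩)
  have h := hF.mono_set hsub
  rw [Measure.volume_eq_prod] at h ⊢
  rw [setIntegral_prod F h, intervalIntegral.integral_of_le ht.1]
  simp only [intervalIntegral.integral_of_le hs.1]

/-- Extending a kernel on the closed quadrant to the plane, by projecting onto the quadrant. -/
theorem continuous_quadrant_extension {κ : ℝ → ℝ → ℝ}
    (hκ : ContinuousOn (fun p : ℝ × ℝ => κ p.1 p.2) (Ici 0 ×ˢ Ici 0)) :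
    Continuous (fun p : ℝ × ℝ => κ (max p.1 0) (max p.2 0)) :=
  hκ.comp_continuous (f := fun p : ℝ × ℝ => (max p.1 0, max p.2 0)) (by fun_prop)
    (fun p => ⟨le_max_right p.1 0, le_max_right p.2 0⟩)

theorem intCov_quadrant_extension (κ : ℝ → ℝ → ℝ) {t s : ℝ} (ht : 0 ≤ t) (hs : 0 ≤ s) :
    intCov κ t s = intCov (fun u v => κ (max u 0) (max v 0)) t s := by
  refine intervalIntegral.integral_congr fun u hu => intervalIntegral.integral_congr fun v hv => ?_
  rw [uIcc_of_le ht] at hu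
  rw [uIcc_of_le hs] at hv
  simp [hu.1, hv.1]

theorem intCov_sub_of_continuous {K : ℝ → ℝ → ℝ} (hK : Continuous (fun p : ℝ × ℝ => K p.1 p.2))
    (a b s : ℝ) : intCov K b s - intCov K a s = ∫ u in a..b, ∫ v in (0:ℝ)..s, K u v := by
  have hG : Continuous fun u => ∫ v in (0:ℝ)..s, K u v :=
    intervalIntegral.continuous_parametric_intervalIntegral_of_continuous' hK 0 s
  exact intervalIntegral.integral_interval_sub_left (hG.intervalIntegrable _ _)
    (hG.intervalIntegrable _ _)

/-- The increment of the integrated covariance in its first argument, rescaled. -/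
theorem intCov_increment {κ : ℝ → ℝ → ℝ}
    (hκ : ContinuousOn (fun p : ℝ × ℝ => κ p.1 p.2) (Ici 0 ×ˢ Ici 0))
    {a ε t T : ℝ} (ha : 0 ≤ a) (hε : 0 ≤ ε) (ht : 0 ≤ t) (hT : 0 ≤ T) :
    intCov κ (a + ε * t) T - intCov κ a T
      = ε * ∫ u in (0:ℝ)..t, ∫ v in (0:ℝ)..T, κ (a + ε * u) v := by
  rw [intCov_quadrant_extension κ (by positivity) hT, intCov_quadrant_extension κ ha hT,
    intCov_sub_of_continuous (continuous_quadrant_extension hκ)]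
  have h := intervalIntegral.mul_integral_comp_add_mul (a := 0) (b := t)
    (f := fun u => ∫ v in (0:ℝ)..T, κ (max u 0) (max v 0)) ε a
  rw [mul_zero, add_zero] at h
  rw [← h]
  congr 1
  refine intervalIntegral.integral_congr fun u hu => intervalIntegral.integral_congr fun v hv => ?_
  rw [uIcc_of_le ht] at hu
  rw [uIcc_of_le hT] at hv
  have : 0 ≤ a + ε * u := add_nonneg ha (mul_nonneg hε hu.1)
  simp [this, hv.1]

/-- The second difference of the integrated covariance, rescaled. -/
theorem intCov_second_difference {κ : ℝ → ℝ → ℝ}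
    (hκ : ContinuousOn (fun p : ℝ × ℝ => κ p.1 p.2) (Ici 0 ×ˢ Ici 0))
    {a ε t s : ℝ} (ha : 0 ≤ a) (hε : 0 ≤ ε) (ht : 0 ≤ t) (hs : 0 ≤ s) :
    intCov κ (a + ε * t) (a + ε * s) - intCov κ (a + ε * t) a - intCov κ a (a + ε * s)
        + intCov κ a a
      = ε ^ 2 * ∫ u in (0:ℝ)..t, ∫ v in (0:ℝ)..s, κ (a + ε * u) (a + ε * v) := by
  have has : 0 ≤ a + ε * s := by positivity
  have hK := continuous_quadrant_extension hκ
  have hcont (S : ℝ) : Continuous fun u => ∫ v in (0:ℝ)..S, κ (max (a + ε * u) 0) (max v 0) :=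
    intervalIntegral.continuous_parametric_intervalIntegral_of_continuous'
      (f := fun u v => κ (max (a + ε * u) 0) (max v 0))
      (hK.comp (by fun_prop : Continuous fun p : ℝ × ℝ => (a + ε * p.1, p.2))) 0 S
  have hext (S : ℝ) (hS : 0 ≤ S) : (∫ u in (0:ℝ)..t, ∫ v in (0:ℝ)..S, κ (a + ε * u) v)
      = ∫ u in (0:ℝ)..t, ∫ v in (0:ℝ)..S, κ (max (a + ε * u) 0) (max v 0) := by
    refine intervalIntegral.integral_congr fun u hu =>
      intervalIntegral.integral_congr fun v hv => ?_
    rw [uIcc_of_le ht] at hu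
    rw [uIcc_of_le hS] at hv
    have : 0 ≤ a + ε * u := add_nonneg ha (mul_nonneg hε hu.1)
    simp [this, hv.1]
  have h₁ := intCov_increment hκ ha hε ht has
  have h₂ := intCov_increment hκ ha hε ht ha
  have h₃ : (∫ u in (0:ℝ)..t, ∫ v in (0:ℝ)..(a + ε * s), κ (a + ε * u) v)
      - (∫ u in (0:ℝ)..t, ∫ v in (0:ℝ)..a, κ (a + ε * u) v)
      = ε * ∫ u in (0:ℝ)..t, ∫ v in (0:ℝ)..s, κ (a + ε * u) (a + ε * v) := by
    rw [hext _ has, hext _ ha, ← intervalIntegral.integral_sub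
      ((hcont _).intervalIntegrable _ _) ((hcont _).intervalIntegrable _ _),
      ← intervalIntegral.integral_const_mul]
    refine intervalIntegral.integral_congr fun u hu => ?_
    rw [uIcc_of_le ht] at hu
    have hu' : 0 ≤ a + ε * u := add_nonneg ha (mul_nonneg hε hu.1)
    have hv : Continuous fun v => κ (max (a + ε * u) 0) (max v 0) :=
      hK.comp (by fun_prop : Continuous fun v : ℝ => (a + ε * u, v))
    have h := intervalIntegral.mul_integral_comp_add_mul (a := 0) (b := s)
      (f := fun v => κ (max (a + ε * u) 0) (max v 0)) ε a
    rw [mul_zero, add_zero] at h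
    rw [intervalIntegral.integral_interval_sub_left (hv.intervalIntegrable _ _)
      (hv.intervalIntegrable _ _), ← h]
    congr 1
    refine intervalIntegral.integral_congr fun v hv => ?_
    rw [uIcc_of_le hs] at hv
    have : 0 ≤ a + ε * v := add_nonneg ha (mul_nonneg hε hv.1)
    simp [this, hu']
  linear_combination h₁ - h₂ + ε * h₃

/-- A family dominated on `S` by a null function of the parameter tends to zero uniformly. -/
theorem tendstoUniformlyOn_zero_of_abs_le {ι β : Type*} {l : Filter ι} {F : ι → β → ℝ}
    {N : ι → ℝ} {S : Set β} (hN : Tendsto N l (𝓝 0)) (h : ∀ᶠ i in l, ∀ x ∈ S, |F i x| ≤ N i) :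
    TendstoUniformlyOn F (fun _ => 0) l S := by
  rw [Metric.tendstoUniformlyOn_iff]
  intro δ hδ
  filter_upwards [h, hN.eventually_lt_const hδ] with i hi hlt x hx
  rw [dist_comm, Real.dist_eq, sub_zero]
  exact (hi x hx).trans_lt hlt

/-- The integral over a subrectangle of an affine expansion remainder. -/
theorem abs_iterated_integral_remainder_le {F g : ℝ × ℝ → ℝ}
    (hF : IntegrableOn F (Icc 0 1 ×ˢ Icc 0 1)) (hg : IntegrableOn g (Icc 0 1 ×ˢ Icc 0 1))
    (A B C : ℝ) {t s : ℝ} (ht : t ∈ Icc (0:ℝ) 1) (hs : s ∈ Icc (0:ℝ) 1) :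
    |(∫ u in (0:ℝ)..t, ∫ v in (0:ℝ)..s, F (u, v)) - A * (t * s)
        - B / 2 * (t ^ 2 * s + t * s ^ 2) - C * ∫ u in (0:ℝ)..t, ∫ v in (0:ℝ)..s, g (u, v)|
      ≤ ∫ p in Icc (0:ℝ) 1 ×ˢ Icc (0:ℝ) 1, |F p - A - B * (p.1 + p.2) - C * g p| := by
  have hsub : Ioc 0 t ×ˢ Ioc 0 s ⊆ Icc (0:ℝ) 1 ×ˢ Icc (0:ℝ) 1 :=
    prod_mono (fun x hx => ⟨hx.1.le, hx.2.trans ht.2⟩) (fun x hx => ⟨hx.1.le, hx.2.trans hs.2⟩)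
  have hP : IntegrableOn (fun p : ℝ × ℝ => A + B * (p.1 + p.2)) (Icc 0 1 ×ˢ Icc 0 1) :=
    (by fun_prop : Continuous fun p : ℝ × ℝ => A + B * (p.1 + p.2)).continuousOn.integrableOn_compact
      (isCompact_Icc.prod isCompact_Icc)
  have hH : IntegrableOn (fun p : ℝ × ℝ => F p - A - B * (p.1 + p.2) - C * g p)
      (Icc 0 1 ×ˢ Icc 0 1) :=
    ((hF.sub hP).sub (hg.const_mul C)).congr
      (Eventually.of_forall fun p => by simp only [Pi.sub_apply]; ring)
  have hpoly : (∫ u in (0:ℝ)..t, ∫ v in (0:ℝ)..s, (A + B * (u + v)))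
      = A * (t * s) + B / 2 * (t ^ 2 * s + t * s ^ 2) := by
    have hin (u : ℝ) : (∫ v in (0:ℝ)..s, (A + B * (u + v))) = (A * s + B * s ^ 2 / 2) + B * s * u := by
      rw [intervalIntegral.integral_add (by simp)
        ((by fun_prop : Continuous fun v : ℝ => B * (u + v)).intervalIntegrable _ _),
        intervalIntegral.integral_const_mul, intervalIntegral.integral_add (by simp) (by simp)]
      simp
      ring
    simp only [hin]
    rw [intervalIntegral.integral_add (by simp)
      ((by fun_prop : Continuous fun u : ℝ => B * s * u).intervalIntegrable _ _),
      intervalIntegral.integral_const_mul]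
    simp
    ring
  have heq : (∫ u in (0:ℝ)..t, ∫ v in (0:ℝ)..s, F (u, v)) - A * (t * s)
        - B / 2 * (t ^ 2 * s + t * s ^ 2) - C * (∫ u in (0:ℝ)..t, ∫ v in (0:ℝ)..s, g (u, v))
      = ∫ p in Ioc 0 t ×ˢ Ioc 0 s, (F p - A - B * (p.1 + p.2) - C * g p) := by
    rw [sub_sub _ (A * (t * s)), ← hpoly,
      iterated_integral_eq_setIntegral hF ht hs, iterated_integral_eq_setIntegral hg ht hs,
      iterated_integral_eq_setIntegral hP ht hs, ← integral_const_mul,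
      ← integral_sub (hF.mono_set hsub) (hP.mono_set hsub),
      ← integral_sub (f := fun p => F p - (A + B * (p.1 + p.2)))
        ((hF.mono_set hsub).sub (hP.mono_set hsub)) ((hg.mono_set hsub).const_mul C)]
    congr 1 with p
    ring
  rw [heq]
  exact (abs_integral_le_integral_abs).trans (setIntegral_mono_set hH.abs
    (Eventually.of_forall fun _ => abs_nonneg _) hsub.eventuallyLE)

/-- The integral over a subinterval of an affine expansion remainder. -/
theorem abs_integral_remainder_le {F g : ℝ → ℝ} (hF : IntegrableOn F (Icc 0 1))
    (hg : IntegrableOn g (Icc 0 1)) (A B C : ℝ) {t : ℝ} (ht : t ∈ Icc (0:ℝ) 1) :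
    |(∫ u in (0:ℝ)..t, F u) - A * t - B / 2 * t ^ 2 - C * ∫ u in (0:ℝ)..t, g u|
      ≤ ∫ u in Icc (0:ℝ) 1, |F u - A - B * u - C * g u| := by
  have hsub : Ioc 0 t ⊆ Icc (0:ℝ) 1 := fun x hx => ⟨hx.1.le, hx.2.trans ht.2⟩
  have hP : IntegrableOn (fun u : ℝ => A + B * u) (Icc 0 1) :=
    (by fun_prop : Continuous fun u : ℝ => A + B * u).integrableOn_Icc
  have hH : IntegrableOn (fun u : ℝ => F u - A - B * u - C * g u) (Icc 0 1) :=
    ((hF.sub hP).sub (hg.const_mul C)).congr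
      (Eventually.of_forall fun p => by simp only [Pi.sub_apply]; ring)
  have hpoly : (∫ u in (0:ℝ)..t, (A + B * u)) = A * t + B / 2 * t ^ 2 := by
    rw [intervalIntegral.integral_add (by simp)
      ((by fun_prop : Continuous fun u : ℝ => B * u).intervalIntegrable _ _),
      intervalIntegral.integral_const_mul]
    simp
    ring
  have heq : (∫ u in (0:ℝ)..t, F u) - A * t - B / 2 * t ^ 2 - C * (∫ u in (0:ℝ)..t, g u)
      = ∫ u in Ioc 0 t, (F u - A - B * u - C * g u) := by
    rw [sub_sub _ (A * t), ← hpoly]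
    simp only [intervalIntegral.integral_of_le ht.1]
    rw [← integral_const_mul, ← integral_sub (hF.mono_set hsub) (hP.mono_set hsub),
      ← integral_sub (f := fun p => F p - (A + B * p))
        ((hF.mono_set hsub).sub (hP.mono_set hsub)) ((hg.mono_set hsub).const_mul C)]
    congr 1 with p
    ring
  rw [heq]
  exact (abs_integral_le_integral_abs).trans (setIntegral_mono_set hH.abs
    (Eventually.of_forall fun _ => abs_nonneg _) hsub.eventuallyLE)

/-- Part 2 of Proposition 4.10: if
`κ(T_n+εu,T_n+εv) = κ(T_n,T_n) + ε·e·(u+v) + ε^{1+α} ĝ(u,v) + o_{L¹}(ε^{1+α})` and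
`∫_0^T κ(T_n+εu,v)dv = ∫_0^T κ(T_n,v)dv + ε·u·f(T) + ε^{1+α} g̃(u;T) + o_{L¹}(ε^{1+α})`,
then Assumption R2 holds for `k = intCov κ`, with `a² = κ(T_n,T_n)`, `b = e/2`,
`c(T) = ∫_0^T κ(T_n,v)dv`, `d(T) = f(T)/2`, `φ̄(t,s) = ∫_0^t∫_0^s ĝ` and
`ψ̄(t;T) = ∫_0^t g̃(u;T)du`; the remainders, divided by `ε^{1+α}`, tend to `0` uniformly. -/
theorem integrated_refined_expansion_R2
    (κ : ℝ → ℝ → ℝ) (Tn α e : ℝ) (f : ℝ → ℝ) (ghat : ℝ × ℝ → ℝ) (gtilde : ℝ → ℝ → ℝ)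
    (hκ : ContinuousOn (fun p : ℝ × ℝ => κ p.1 p.2) (Ici 0 ×ˢ Ici 0))
    (hTn : 0 < Tn) (hα : α ∈ Ioc (0:ℝ) 1)
    (hghat : IntegrableOn ghat (Icc 0 1 ×ˢ Icc 0 1) volume)
    (hghat_lim : Tendsto
      (fun ε => (∫ p in (Icc (0:ℝ) 1 ×ˢ Icc (0:ℝ) 1),
        |κ (Tn + ε * p.1) (Tn + ε * p.2) - κ Tn Tn - ε * e * (p.1 + p.2) -
          ε ^ (1 + α) * ghat p|) / ε ^ (1 + α))
      (𝓝[>] (0:ℝ)) (𝓝 0))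
    (hgtilde : ∀ T : ℝ, 0 < T → IntegrableOn (fun u => gtilde u T) (Icc 0 1) volume)
    (hgtilde_lim : ∀ T : ℝ, 0 < T → Tendsto
      (fun ε => (∫ u in Icc (0:ℝ) 1,
        |(∫ v in (0:ℝ)..T, κ (Tn + ε * u) v) - (∫ v in (0:ℝ)..T, κ Tn v) -
          ε * u * f T - ε ^ (1 + α) * gtilde u T|) / ε ^ (1 + α))
      (𝓝[>] (0:ℝ)) (𝓝 0)) :
    (TendstoUniformlyOn
      (fun ε (p : ℝ × ℝ) =>
        ((intCov κ (Tn + ε * p.1) (Tn + ε * p.2) - intCov κ (Tn + ε * p.1) Tn -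
            intCov κ Tn (Tn + ε * p.2) + intCov κ Tn Tn) / ε ^ 2 -
          κ Tn Tn * (p.1 * p.2) -
          e / 2 * (p.1 ^ 2 * p.2 + p.1 * p.2 ^ 2) * ε -
          (∫ u in (0:ℝ)..p.1, ∫ v in (0:ℝ)..p.2, ghat (u, v)) * ε ^ (1 + α)) / ε ^ (1 + α))
      (fun _ => 0) (𝓝[>] (0:ℝ)) (Icc 0 1 ×ˢ Icc 0 1)) ∧
    (∀ T : ℝ, 0 < T → TendstoUniformlyOn
      (fun ε t =>
        ((intCov κ (Tn + ε * t) T - intCov κ Tn T) / ε -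
          (∫ v in (0:ℝ)..T, κ Tn v) * t -
          f T / 2 * t ^ 2 * ε -
          (∫ u in (0:ℝ)..t, gtilde u T) * ε ^ (1 + α)) / ε ^ (1 + α))
      (fun _ => 0) (𝓝[>] (0:ℝ)) (Icc 0 1)) := by
  refine ⟨tendstoUniformlyOn_zero_of_abs_le hghat_lim ?_, fun T hT =>
    tendstoUniformlyOn_zero_of_abs_le (hgtilde_lim T hT) ?_⟩
  · filter_upwards [self_mem_nhdsWithin] with ε hε p hp
    have hε : 0 < ε := hε
    have hpow : 0 < ε ^ (1 + α) := Real.rpow_pos_of_pos hε _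
    have hF : IntegrableOn (fun p : ℝ × ℝ => κ (Tn + ε * p.1) (Tn + ε * p.2))
        (Icc 0 1 ×ˢ Icc 0 1) := by
      refine ContinuousOn.integrableOn_compact (isCompact_Icc.prod isCompact_Icc)
        (hκ.comp (f := fun p : ℝ × ℝ => (Tn + ε * p.1, Tn + ε * p.2)) (by fun_prop) ?_)
      exact fun q hq => ⟨add_nonneg hTn.le (mul_nonneg hε.le hq.1.1),
        add_nonneg hTn.le (mul_nonneg hε.le hq.2.1)⟩
    rw [intCov_second_difference hκ hTn.le hε.le hp.1.1 hp.2.1,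
      mul_div_cancel_left₀ _ (by positivity), abs_div, abs_of_pos hpow]
    gcongr
    exact (congrArg abs (by ring)).trans_le (abs_iterated_integral_remainder_le hF hghat
      (κ Tn Tn) (ε * e) (ε ^ (1 + α)) hp.1 hp.2)
  · filter_upwards [self_mem_nhdsWithin] with ε hε t ht
    have hε : 0 < ε := hε
    have hpow : 0 < ε ^ (1 + α) := Real.rpow_pos_of_pos hε _
    have hF : IntegrableOn (fun u => ∫ v in (0:ℝ)..T, κ (Tn + ε * u) v) (Icc 0 1) := by
      have hcont : Continuous fun u => ∫ v in (0:ℝ)..T, κ (max (Tn + ε * u) 0) (max v 0) :=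
        intervalIntegral.continuous_parametric_intervalIntegral_of_continuous'
          (f := fun u v => κ (max (Tn + ε * u) 0) (max v 0))
          ((continuous_quadrant_extension hκ).comp
            (by fun_prop : Continuous fun p : ℝ × ℝ => (Tn + ε * p.1, p.2))) 0 T
      refine hcont.integrableOn_Icc.congr_fun (fun u hu => ?_) measurableSet_Icc
      refine intervalIntegral.integral_congr fun v hv => ?_
      rw [uIcc_of_le hT.le] at hv
      have : 0 ≤ Tn + ε * u := add_nonneg hTn.le (mul_nonneg hε.le hu.1)
      simp [this, hv.1]
    rw [intCov_increment hκ hTn.le hε.le ht.1 hT.le, mul_div_cancel_left₀ _ hε.ne', abs_div,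
      abs_of_pos hpow]
    gcongr
    simp only [mul_right_comm ε _ (f T)]
    exact (congrArg abs (by ring)).trans_le (abs_integral_remainder_le hF (hgtilde T hT)
      (∫ v in (0:ℝ)..T, κ Tn v) (ε * f T) (ε ^ (1 + α)) ht)
end

section
/- Let α ∈ (0,1], a ≠ 0, let φ : [0,1]² → ℝ be continuous, and for each ε > 0 let K_ε : [0,1]² → ℝ satisfy K_ε(t,s) = ε²[a²·ts + φ(t,s)·ε^α + R_ε(t,s)] with sup_{t,s∈[0,1]} |R_ε(t,s)|/ε^α → 0 as ε → 0⁺. Then for all sufficiently small ε > 0 one has K_ε(1,1) ≠ 0, and [K_ε(t,s) − K_ε(t,1)·K_ε(1,s)/K_ε(1,1)]/ε^{2+α} converges, uniformly for (t,s) ∈ [0,1]² as ε → 0⁺, to k̄_Y(t,s) = φ(t,s) + ts·φ(1,1) − t·φ(1,s) − s·φ(t,1). -/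
open MeasureTheory Filter Topology Set

/-- If `kts = A·ts + e·(f + r)` and likewise at `(t,1)`, `(1,s)` and `(1,1)`, with `|f|, |f + r| ≤ N`
and `|r| ≤ δ`, then the Schur complement `kts - kt * ks / k₁`, divided by `e`, differs
from its first-order term by at most `8δ + 12eN²/A`. -/
lemma abs_schur_complement_div_sub_le {A e N δ t s f ft fs f₁ r rt rs r₁ : ℝ}
    (hA : 0 < A) (he : 0 < e) (heN : e * N ≤ A / 2)
    (ht : t ∈ Icc (0:ℝ) 1) (hs : s ∈ Icc (0:ℝ) 1)
    (hf : |f| ≤ N) (hft : |ft| ≤ N) (hfs : |fs| ≤ N) (hf₁ : |f₁| ≤ N)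
    (hr : |r| ≤ δ) (hrt : |rt| ≤ δ) (hrs : |rs| ≤ δ) (hr₁ : |r₁| ≤ δ)
    (hg : |f + r| ≤ N) (hgt : |ft + rt| ≤ N) (hgs : |fs + rs| ≤ N) (hg₁ : |f₁ + r₁| ≤ N) :
    |((A * (t * s) + e * (f + r)) -
        (A * t + e * (ft + rt)) * (A * s + e * (fs + rs)) / (A + e * (f₁ + r₁))) / e -
      (f + t * s * f₁ - t * fs - s * ft)| ≤ 8 * δ + 12 * e * N ^ 2 / A := by
  have hN : 0 ≤ N := (abs_nonneg f).trans hf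
  have hmul {x y a b : ℝ} (hx : |x| ≤ a) (hy : |y| ≤ b) : |x * y| ≤ a * b := by
    rw [abs_mul]
    exact mul_le_mul hx hy (abs_nonneg y) ((abs_nonneg x).trans hx)
  have ht' : |t| ≤ 1 := abs_le.2 ⟨by linarith [ht.1], ht.2⟩
  have hs' : |s| ≤ 1 := abs_le.2 ⟨by linarith [hs.1], hs.2⟩
  have comb {x xt xs x₁ b : ℝ} (h : |x| ≤ b) (h_t : |xt| ≤ b) (h_s : |xs| ≤ b) (h₁ : |x₁| ≤ b) :
      |x + t * s * x₁ - t * xs - s * xt| ≤ 4 * b := by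
    have h1 := abs_le.1 (hmul (hmul ht' hs') h₁)
    have h2 := abs_le.1 (hmul ht' h_s)
    have h3 := abs_le.1 (hmul hs' h_t)
    have h4 := abs_le.1 h
    exact abs_le.2 ⟨by linarith, by linarith⟩
  have hden : A / 2 ≤ A + e * (f₁ + r₁) := by
    have := (abs_le.1 (hmul (abs_of_pos he).le hg₁)).1
    linarith
  have hden0 : 0 < A + e * (f₁ + r₁) := by linarith
  have key : ((A * (t * s) + e * (f + r)) -
        (A * t + e * (ft + rt)) * (A * s + e * (fs + rs)) / (A + e * (f₁ + r₁))) / e -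
      (f + t * s * f₁ - t * fs - s * ft) =
      (A * (r + t * s * r₁ - t * rs - s * rt) +
        e * ((f + r) * (f₁ + r₁) - (ft + rt) * (fs + rs) -
          (f₁ + r₁) * (f + t * s * f₁ - t * fs - s * ft))) / (A + e * (f₁ + r₁)) := by
    have h0 := hden0.ne'
    field_simp
    ring
  have hnum : |A * (r + t * s * r₁ - t * rs - s * rt) +
        e * ((f + r) * (f₁ + r₁) - (ft + rt) * (fs + rs) -
          (f₁ + r₁) * (f + t * s * f₁ - t * fs - s * ft))| ≤ A * (4 * δ) + e * (6 * N ^ 2) := by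
    refine (abs_add_le _ _).trans (add_le_add (hmul (abs_of_pos hA).le (comb hr hrt hrs hr₁))
      (hmul (abs_of_pos he).le ?_))
    have h1 := abs_le.1 (hmul hg hg₁)
    have h2 := abs_le.1 (hmul hgt hgs)
    have h3 := abs_le.1 (hmul hg₁ (comb hf hft hfs hf₁))
    exact abs_le.2 ⟨by linarith, by linarith⟩
  have hδ : 0 ≤ δ := (abs_nonneg r).trans hr
  rw [key, abs_div, abs_of_pos hden0, div_le_iff₀ hden0]
  calc _ ≤ A * (4 * δ) + e * (6 * N ^ 2) := hnum
    _ = (8 * δ + 12 * e * N ^ 2 / A) * (A / 2) := by field_simp; ring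
    _ ≤ _ := by gcongr

/-- If `K_ε(t,s) = ε²[a²·ts + φ(t,s)ε^α + R_ε(t,s)]` with `sup_{[0,1]²}|R_ε|/ε^α → 0`, then
eventually `K_ε(1,1) ≠ 0` and the bridge covariance
`K_ε(t,s) − K_ε(t,1)K_ε(1,s)/K_ε(1,1)`, rescaled by `ε^{2+α}`, converges uniformly on
`[0,1]²` to `k̄_Y(t,s) = φ(t,s) + ts·φ(1,1) − t·φ(1,s) − s·φ(t,1)`. -/
theorem bridge_covariance_refined_limit
    (α a : ℝ) (hα : α ∈ Ioc (0:ℝ) 1) (ha : a ≠ 0)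
    (φ : ℝ → ℝ → ℝ)
    (hφ : ContinuousOn (fun p : ℝ × ℝ => φ p.1 p.2) (Icc 0 1 ×ˢ Icc 0 1))
    (K : ℝ → ℝ → ℝ → ℝ)
    (hK : TendstoUniformlyOn
      (fun ε (p : ℝ × ℝ) =>
        (K ε p.1 p.2 / ε ^ 2 - a ^ 2 * (p.1 * p.2) - φ p.1 p.2 * ε ^ α) / ε ^ α)
      (fun _ => 0) (𝓝[>] (0:ℝ)) (Icc 0 1 ×ˢ Icc 0 1)) :
    (∀ᶠ ε in 𝓝[>] (0:ℝ), K ε 1 1 ≠ 0) ∧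
    TendstoUniformlyOn
      (fun ε (p : ℝ × ℝ) =>
        (K ε p.1 p.2 - K ε p.1 1 * K ε 1 p.2 / K ε 1 1) / ε ^ (2 + α))
      (fun p => φ p.1 p.2 + p.1 * p.2 * φ 1 1 - p.1 * φ 1 p.2 - p.2 * φ p.1 1)
      (𝓝[>] (0:ℝ)) (Icc 0 1 ×ˢ Icc 0 1) := by
  obtain ⟨M, hM⟩ := (isCompact_Icc.prod isCompact_Icc).exists_bound_of_continuousOn hφ
  have hA : 0 < a ^ 2 := by positivity
  have h1 : (1:ℝ) ∈ Icc (0:ℝ) 1 := ⟨zero_le_one, le_rfl⟩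
  have hpow : Tendsto (fun ε : ℝ => ε ^ α) (𝓝[>] 0) (𝓝 0) := by
    have := (Real.continuousAt_rpow_const 0 α (Or.inr hα.1.le)).tendsto
    rw [Real.zero_rpow hα.1.ne'] at this
    exact this.mono_left nhdsWithin_le_nhds
  set r : ℝ → ℝ → ℝ → ℝ := fun ε t s =>
    (K ε t s / ε ^ 2 - a ^ 2 * (t * s) - φ t s * ε ^ α) / ε ^ α with hr
  have hKr {ε : ℝ} (hε : 0 < ε) (t s : ℝ) :
      K ε t s = ε ^ 2 * (a ^ 2 * (t * s) + ε ^ α * (φ t s + r ε t s)) := by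
    have := (Real.rpow_pos_of_pos hε α).ne'
    simp only [hr]
    field_simp
    ring
  have hφN {t s : ℝ} (ht : t ∈ Icc (0:ℝ) 1) (hs : s ∈ Icc (0:ℝ) 1) : |φ t s| ≤ M :=
    hM (t, s) ⟨ht, hs⟩
  have hrδ (δ : ℝ) (hδ : 0 < δ) : ∀ᶠ ε in 𝓝[>] (0:ℝ),
      ∀ t ∈ Icc (0:ℝ) 1, ∀ s ∈ Icc (0:ℝ) 1, |r ε t s| ≤ δ := by
    filter_upwards [Metric.tendstoUniformlyOn_iff.1 hK δ hδ] with ε h t ht s hs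
    have := h (t, s) ⟨ht, hs⟩
    rw [dist_comm, Real.dist_eq, sub_zero] at this
    exact this.le
  have hsmall : ∀ᶠ ε in 𝓝[>] (0:ℝ), ε ^ α * (M + 1) < a ^ 2 / 2 := by
    have := hpow.mul_const (M + 1)
    rw [zero_mul] at this
    exact this.eventually_lt_const (by positivity)
  have hg {ε t s δ : ℝ} (hδ : δ ≤ 1) (ht : t ∈ Icc (0:ℝ) 1) (hs : s ∈ Icc (0:ℝ) 1)
      (h : |r ε t s| ≤ δ) : |φ t s + r ε t s| ≤ M + 1 :=
    (abs_add_le _ _).trans (add_le_add (hφN ht hs) (h.trans hδ))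
  refine ⟨?_, Metric.tendstoUniformlyOn_iff.2 fun η hη => ?_⟩
  · filter_upwards [hrδ 1 one_pos, hsmall, self_mem_nhdsWithin] with ε hε hεs hε0
    have hε0 : 0 < ε := hε0
    have hp := Real.rpow_pos_of_pos hε0 α
    have hb := mul_le_mul_of_nonneg_left
      (abs_le.1 (hg le_rfl h1 h1 (hε 1 h1 1 h1))).1 hp.le
    rw [hKr hε0]
    have : 0 < a ^ 2 * (1 * 1) + ε ^ α * (φ 1 1 + r ε 1 1) := by linarith
    positivity
  · have herr : ∀ᶠ ε in 𝓝[>] (0:ℝ), 12 * ε ^ α * (M + 1) ^ 2 / a ^ 2 < η / 2 := by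
      have := ((hpow.const_mul 12).mul_const ((M + 1) ^ 2)).div_const (a ^ 2)
      rw [mul_zero, zero_mul, zero_div] at this
      exact this.eventually_lt_const (by positivity)
    have hδ : 0 < min 1 (η / 16) := by positivity
    filter_upwards [hrδ _ hδ, hsmall, herr, self_mem_nhdsWithin]
      with ε hε hεs hεe hε0 ⟨t, s⟩ ⟨ht, hs⟩
    have hε0 : 0 < ε := hε0
    have hp := Real.rpow_pos_of_pos hε0 α
    have hδ1 : min 1 (η / 16) ≤ 1 := min_le_left _ _
    have hδη : min 1 (η / 16) ≤ η / 16 := min_le_right _ _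
    have hN {t s : ℝ} (ht : t ∈ Icc (0:ℝ) 1) (hs : s ∈ Icc (0:ℝ) 1) : |φ t s| ≤ M + 1 :=
      (hφN ht hs).trans (by linarith)
    have hbound := abs_schur_complement_div_sub_le hA hp hεs.le ht hs
      (hN ht hs) (hN ht h1) (hN h1 hs) (hN h1 h1)
      (hε t ht s hs) (hε t ht 1 h1) (hε 1 h1 s hs) (hε 1 h1 1 h1)
      (hg hδ1 ht hs (hε t ht s hs)) (hg hδ1 ht h1 (hε t ht 1 h1))
      (hg hδ1 h1 hs (hε 1 h1 s hs)) (hg hδ1 h1 h1 (hε 1 h1 1 h1))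
    have hrescale (x y z w : ℝ) :
        (ε ^ 2 * x - ε ^ 2 * y * (ε ^ 2 * z) / (ε ^ 2 * w)) / ε ^ (2 + α) =
          (x - y * z / w) / ε ^ α := by
      rw [Real.rpow_add hε0, Real.rpow_two, mul_assoc (ε ^ 2) y, mul_div_mul_left _ _ (by positivity),
        show y * (ε ^ 2 * z) / w = ε ^ 2 * (y * z / w) by ring, ← mul_sub,
        mul_div_mul_left _ _ (by positivity)]
    rw [dist_comm, Real.dist_eq]
    dsimp only at ht hs ⊢
    rw [hKr hε0 t s, hKr hε0 t 1, hKr hε0 1 s, hKr hε0 1 1, hrescale]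
    simp only [mul_one, one_mul]
    linarith
end

section
/- Let α ∈ (0,1), a ≠ 0, b ∈ ℝ, let φ : [0,1]² → ℝ be continuous, and for each ε > 0 let K_ε : [0,1]² → ℝ satisfy K_ε(t,s) = ε²[a²·ts + b(t²s + ts²)·ε + φ(t,s)·ε^{1+α} + R_ε(t,s)] with sup_{t,s∈[0,1]} |R_ε(t,s)|/ε^{1+α} → 0 as ε → 0⁺. Then for all sufficiently small ε > 0 one has K_ε(1,1) ≠ 0, and [K_ε(t,s) − K_ε(t,1)·K_ε(1,s)/K_ε(1,1)]/ε^{3+α} converges, uniformly for (t,s) ∈ [0,1]² as ε → 0⁺, to k̄_Y(t,s) = φ(t,s) + ts·φ(1,1) − t·φ(1,s) − s·φ(t,1). -/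
open MeasureTheory Filter Topology Set

/-- On a compact set, continuous convergence to a continuous limit is uniform. -/
theorem tendstoUniformlyOn_of_forall_tendsto_prod {ι X β : Type*} [TopologicalSpace X]
    [UniformSpace β] {F : ι → X → β} {f : X → β} {l : Filter ι} {S : Set X}
    (hS : IsCompact S) (hf : ContinuousOn f S)
    (h : ∀ x ∈ S, Tendsto (fun q : ι × X => F q.1 q.2) (l ×ˢ 𝓝[S] x) (𝓝 (f x))) :
    TendstoUniformlyOn F f l S := by
  rw [← tendstoLocallyUniformlyOn_iff_tendstoUniformlyOn_of_compact hS,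
    tendstoLocallyUniformlyOn_iff_forall_tendsto]
  intro x hx
  have hfx : Tendsto (fun q : ι × X => f q.2) (l ×ˢ 𝓝[S] x) (𝓝 (f x)) :=
    (hf x hx).tendsto.comp tendsto_snd
  exact (hfx.prodMk_nhds (h x hx)).mono_right (nhds_le_uniformity (f x))

/-- Exact expansion of the rescaled bridge covariance, where `u` stands for `ε ^ (1 + α)`, `v` for
`ε ^ (1 - α)`, and `p, q, r, w` for the coefficients of `u` at `(t, s)`, `(t, 1)`, `(1, s)`,
`(1, 1)`. -/
theorem bridge_rescaled_eq {A b ε u v t s p q r w k k₁ k₂ k₀ : ℝ}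
    (hε : ε ≠ 0) (hu : u ≠ 0) (huv : u * v = ε ^ 2)
    (hk : k / ε ^ 2 = A * (t * s) + b * (t ^ 2 * s + t * s ^ 2) * ε + p * u)
    (hk₁ : k₁ / ε ^ 2 = A * (t * 1) + b * (t ^ 2 * 1 + t * 1 ^ 2) * ε + q * u)
    (hk₂ : k₂ / ε ^ 2 = A * (1 * s) + b * (1 ^ 2 * s + 1 * s ^ 2) * ε + r * u)
    (hk₀ : k₀ / ε ^ 2 = A * (1 * 1) + b * (1 ^ 2 * 1 + 1 * 1 ^ 2) * ε + w * u)
    (h₀ : A + 2 * b * ε + w * u ≠ 0) :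
    (k - k₁ * k₂ / k₀) / (ε ^ 2 * u) =
      (p * (A + 2 * b * ε) + t * s * (A + b * ε * (t + s)) * w - t * (A + b * ε * (t + 1)) * r
        - s * (A + b * ε * (1 + s)) * q + (p * w - q * r) * u
        - t * s * b ^ 2 * (1 - t) * (1 - s) * v) / (A + 2 * b * ε + w * u) := by
  have hε2 : ε ^ 2 ≠ 0 := pow_ne_zero 2 hε
  rw [div_eq_iff hε2] at hk hk₁ hk₂ hk₀
  have hk₀' : k₀ = (A + 2 * b * ε + w * u) * ε ^ 2 := by rw [hk₀]; ring
  rw [hk₀', hk, hk₁, hk₂]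
  generalize hD : A + 2 * b * ε + w * u = D at h₀ ⊢
  field_simp
  rw [← hD]
  linear_combination (t * s * b ^ 2 * (1 - t) * (1 - s)) * huv

/-- If `K_ε(t,s) = ε²[a²·ts + b(t²s+ts²)ε + φ(t,s)ε^{1+α} + R_ε(t,s)]` with
`sup_{[0,1]²}|R_ε|/ε^{1+α} → 0` and `α ∈ (0,1)`, then eventually `K_ε(1,1) ≠ 0` and the
bridge covariance `K_ε(t,s) − K_ε(t,1)K_ε(1,s)/K_ε(1,1)`, rescaled by `ε^{3+α}`, converges
uniformly on `[0,1]²` to `k̄_Y(t,s) = φ(t,s) + ts·φ(1,1) − t·φ(1,s) − s·φ(t,1)`. -/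
theorem bridge_covariance_refined_limit_secondOrder
    (α a b : ℝ) (hα : α ∈ Ioo (0:ℝ) 1) (ha : a ≠ 0)
    (φ : ℝ → ℝ → ℝ)
    (hφ : ContinuousOn (fun p : ℝ × ℝ => φ p.1 p.2) (Icc 0 1 ×ˢ Icc 0 1))
    (K : ℝ → ℝ → ℝ → ℝ)
    (hK : TendstoUniformlyOn
      (fun ε (p : ℝ × ℝ) =>
        (K ε p.1 p.2 / ε ^ 2 - a ^ 2 * (p.1 * p.2) -
          b * (p.1 ^ 2 * p.2 + p.1 * p.2 ^ 2) * ε -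
          φ p.1 p.2 * ε ^ (1 + α)) / ε ^ (1 + α))
      (fun _ => 0) (𝓝[>] (0:ℝ)) (Icc 0 1 ×ˢ Icc 0 1)) :
    (∀ᶠ ε in 𝓝[>] (0:ℝ), K ε 1 1 ≠ 0) ∧
    TendstoUniformlyOn
      (fun ε (p : ℝ × ℝ) =>
        (K ε p.1 p.2 - K ε p.1 1 * K ε 1 p.2 / K ε 1 1) / ε ^ (3 + α))
      (fun p => φ p.1 p.2 + p.1 * p.2 * φ 1 1 - p.1 * φ 1 p.2 - p.2 * φ p.1 1)
      (𝓝[>] (0:ℝ)) (Icc 0 1 ×ˢ Icc 0 1) := by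
  obtain ⟨hα0, hα1⟩ := hα
  set S : Set (ℝ × ℝ) := Icc 0 1 ×ˢ Icc 0 1
  set ρ : ℝ → ℝ × ℝ → ℝ := fun ε p =>
    (K ε p.1 p.2 / ε ^ 2 - a ^ 2 * (p.1 * p.2) -
      b * (p.1 ^ 2 * p.2 + p.1 * p.2 ^ 2) * ε - φ p.1 p.2 * ε ^ (1 + α)) / ε ^ (1 + α) with hρ
  have hScomp : IsCompact S := isCompact_Icc.prod isCompact_Icc
  have one_mem : (1 : ℝ) ∈ Icc (0 : ℝ) 1 := by simp
  have hpow : ∀ c : ℝ, 0 < c → Tendsto (fun ε : ℝ => ε ^ c) (𝓝[>] 0) (𝓝 0) := fun c hc => by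
    have := (Real.continuousAt_rpow_const 0 c (Or.inr hc.le)).tendsto
    rw [Real.zero_rpow hc.ne'] at this
    exact this.mono_left nhdsWithin_le_nhds
  have hid : Tendsto (fun ε : ℝ => ε) (𝓝[>] 0) (𝓝 0) := tendsto_id.mono_left nhdsWithin_le_nhds
  have hexp : ∀ ε : ℝ, 0 < ε → ∀ t s : ℝ, K ε t s / ε ^ 2 =
      a ^ 2 * (t * s) + b * (t ^ 2 * s + t * s ^ 2) * ε + (φ t s + ρ ε (t, s)) * ε ^ (1 + α) := by
    intro ε hε t s
    have hu : ε ^ (1 + α) ≠ 0 := (Real.rpow_pos_of_pos hε _).ne'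
    simp only [hρ, add_mul, div_mul_cancel₀ _ hu]
    ring
  have hA : a ^ 2 ≠ 0 := pow_ne_zero 2 ha
  have hden : Tendsto (fun ε : ℝ => a ^ 2 + 2 * b * ε + (φ 1 1 + ρ ε (1, 1)) * ε ^ (1 + α))
      (𝓝[>] 0) (𝓝 (a ^ 2)) := by
    have h11 : Tendsto (fun ε => ρ ε (1, 1)) (𝓝[>] 0) (𝓝 0) := hK.tendsto_at ⟨one_mem, one_mem⟩
    simpa using (tendsto_const_nhds.add (hid.const_mul (2 * b))).add
      ((h11.const_add (φ 1 1)).mul (hpow (1 + α) (by linarith)))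
  have hden0 := hden.eventually_ne hA
  refine ⟨?_, ?_⟩
  · filter_upwards [hden0, self_mem_nhdsWithin] with ε h0 hε hK0
    have := hexp ε hε 1 1
    rw [hK0, zero_div] at this
    exact h0 (by linarith)
  have hφ₁ : ContinuousOn (fun p : ℝ × ℝ => φ p.1 1) S :=
    hφ.comp (f := fun p : ℝ × ℝ => (p.1, (1 : ℝ))) (by fun_prop) fun p hp => ⟨hp.1, one_mem⟩
  have hφ₂ : ContinuousOn (fun p : ℝ × ℝ => φ 1 p.2) S :=
    hφ.comp (f := fun p : ℝ × ℝ => ((1 : ℝ), p.2)) (by fun_prop) fun p hp => ⟨one_mem, hp.2⟩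
  have hlimit : ContinuousOn (fun p : ℝ × ℝ =>
      φ p.1 p.2 + p.1 * p.2 * φ 1 1 - p.1 * φ 1 p.2 - p.2 * φ p.1 1) S :=
    ((hφ.add (by fun_prop)).sub (continuousOn_fst.mul hφ₂)).sub (continuousOn_snd.mul hφ₁)
  refine tendstoUniformlyOn_of_forall_tendsto_prod hScomp hlimit fun x hx => ?_
  set L : Filter (ℝ × (ℝ × ℝ)) := 𝓝[>] (0 : ℝ) ×ˢ 𝓝[S] x
  have hfst : Tendsto Prod.fst L (𝓝[>] (0 : ℝ)) := tendsto_fst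
  have hsnd : Tendsto Prod.snd L (𝓝[S] x) := tendsto_snd
  have hsndS : Tendsto Prod.snd L (𝓟 S) := hsnd.mono_right inf_le_right
  have hρL : ∀ g : ℝ × ℝ → ℝ × ℝ, MapsTo g S S →
      Tendsto (fun q : ℝ × (ℝ × ℝ) => ρ q.1 (g q.2)) L (𝓝 0) := by
    intro g hg
    rw [Metric.tendsto_nhds]
    intro δ hδ
    filter_upwards [hfst.eventually (Metric.tendstoUniformlyOn_iff.1 hK δ hδ),
      hsndS.eventually (mem_principal_self S)] with q h1 h2
    rw [dist_comm]
    exact h1 _ (hg h2)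
  have ht : Tendsto (fun q : ℝ × (ℝ × ℝ) => q.2.1) L (𝓝 x.1) :=
    (continuous_fst.tendsto x).comp (hsnd.mono_right nhdsWithin_le_nhds)
  have hs : Tendsto (fun q : ℝ × (ℝ × ℝ) => q.2.2) L (𝓝 x.2) :=
    (continuous_snd.tendsto x).comp (hsnd.mono_right nhdsWithin_le_nhds)
  have he : Tendsto (fun q : ℝ × (ℝ × ℝ) => q.1) L (𝓝 0) := hid.comp hfst
  have hu : Tendsto (fun q : ℝ × (ℝ × ℝ) => q.1 ^ (1 + α)) L (𝓝 0) :=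
    (hpow (1 + α) (by linarith)).comp hfst
  have hv : Tendsto (fun q : ℝ × (ℝ × ℝ) => q.1 ^ (1 - α)) L (𝓝 0) :=
    (hpow (1 - α) (by linarith)).comp hfst
  have hp : Tendsto (fun q : ℝ × (ℝ × ℝ) => φ q.2.1 q.2.2 + ρ q.1 (q.2.1, q.2.2)) L
      (𝓝 (φ x.1 x.2 + 0)) :=
    ((hφ x hx).tendsto.comp hsnd).add (hρL (fun p => (p.1, p.2)) fun p hp => hp)
  have hq : Tendsto (fun q : ℝ × (ℝ × ℝ) => φ q.2.1 1 + ρ q.1 (q.2.1, 1)) L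
      (𝓝 (φ x.1 1 + 0)) :=
    ((hφ₁ x hx).tendsto.comp hsnd).add (hρL (fun p => (p.1, 1)) fun p hp => ⟨hp.1, one_mem⟩)
  have hr : Tendsto (fun q : ℝ × (ℝ × ℝ) => φ 1 q.2.2 + ρ q.1 (1, q.2.2)) L
      (𝓝 (φ 1 x.2 + 0)) :=
    ((hφ₂ x hx).tendsto.comp hsnd).add (hρL (fun p => (1, p.2)) fun p hp => ⟨one_mem, hp.2⟩)
  have hw : Tendsto (fun q : ℝ × (ℝ × ℝ) => φ 1 1 + ρ q.1 (1, 1)) L (𝓝 (φ 1 1 + 0)) :=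
    (hρL (fun _ => (1, 1)) fun p _ => ⟨one_mem, one_mem⟩).const_add _
  have hb (c : ℝ × (ℝ × ℝ) → ℝ) (c₀ : ℝ) (hc : Tendsto c L (𝓝 c₀)) :
      Tendsto (fun q => a ^ 2 + b * q.1 * c q) L (𝓝 (a ^ 2 + b * 0 * c₀)) :=
    ((he.const_mul b).mul hc).const_add _
  have hlim := ((((((hp.mul ((he.const_mul (2 * b)).const_add (a ^ 2))).add
    (((ht.mul hs).mul (hb _ _ (ht.add hs))).mul hw)).sub
    ((ht.mul (hb _ _ (ht.add_const 1))).mul hr)).sub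
    ((hs.mul (hb _ _ (hs.const_add 1))).mul hq)).add
    (((hp.mul hw).sub (hq.mul hr)).mul hu)).sub
    (((((ht.mul hs).mul_const (b ^ 2)).mul (ht.const_sub 1)).mul (hs.const_sub 1)).mul hv)).div
    (hden.comp hfst) hA
  refine (hlim.congr' ?_).mono_right (le_of_eq ?_)
  · filter_upwards [hfst.eventually hden0, hfst.eventually self_mem_nhdsWithin] with q h0 hq
    have hq : 0 < q.1 := hq
    have h3 : q.1 ^ (3 + α) = q.1 ^ 2 * q.1 ^ (1 + α) := by
      rw [← Real.rpow_natCast, ← Real.rpow_add hq]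
      norm_num
      ring_nf
    have huv : q.1 ^ (1 + α) * q.1 ^ (1 - α) = q.1 ^ 2 := by
      rw [← Real.rpow_natCast, ← Real.rpow_add hq]
      norm_num
    rw [h3]
    exact (bridge_rescaled_eq hq.ne' (Real.rpow_pos_of_pos hq _).ne' huv (hexp _ hq _ _)
      (hexp _ hq _ _) (hexp _ hq _ _) (hexp _ hq _ _) h0).symm
  · congr 1
    field_simp
    ring
end
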